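/- arXiv:2106.15256 — 9 statements merged into one kernel-verified Lean document; each statement's English description precedes it below -/
import Mathlib

section
/- Let b ∈ ℕ⁺, let τ ∈ {τ_PPT^b, τ_PT^b, τ_ZPT^b, τ_ZPPT^b} and let A = (S, E, δ, ι) be a TS. Every τ-region (sup, sig) of A satisfies, for every directed labeled path q₀ −e₁→ q₁ −e₂→ … −e_ℓ→ q_ℓ of A and every i ∈ {1,…,ℓ}, the congruence sup(qᵢ) ≡ sup(q_{i−1}) − sig⁻(eᵢ) + sig⁺(eᵢ) + |sig(eᵢ)| (mod b+1). Consequently, a τ-region of A is completely determined by its signature and its value on the initial state: if two τ-regions of A have the same signature sig and agree on ι, then they are equal. -/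
namespace PNS

/-- Events of a (b-bounded) type of nets: either a pair `(m,n)` or a group element `z ∈ {0,…,b}`. -/
inductive BEvent : Type
  | pair : ℕ → ℕ → BEvent
  | num : ℕ → BEvent
  deriving DecidableEq

/-- A type of nets `τ = (S_τ, E_τ, δ_τ)` with `S_τ ⊆ ℕ`. -/
structure NetType : Type where
  states : Set ℕ
  events : Set BEvent
  delta : ℕ → BEvent → Option ℕ

def deltaPT (b : ℕ) : ℕ → BEvent → Option ℕ
  | s, .pair m n => if m ≤ s ∧ s - m + n ≤ b then some (s - m + n) else none
  | _, .num _ => none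

def deltaZPT (b : ℕ) : ℕ → BEvent → Option ℕ
  | s, .pair m n => if m ≤ s ∧ s - m + n ≤ b then some (s - m + n) else none
  | s, .num z => some ((s + z) % (b + 1))

def deltaRZPT (b : ℕ) : ℕ → BEvent → Option ℕ
  | s, .pair m n => if s = m ∧ n ≤ b then some n else none
  | s, .num z => some ((s + z) % (b + 1))

/-- The type of `b`-bounded P/T-nets. -/
def tauPT (b : ℕ) : NetType :=
  ⟨{s | s ≤ b}, {e | ∃ m n, e = BEvent.pair m n ∧ m ≤ b ∧ n ≤ b}, deltaPT b⟩

/-- The type of pure `b`-bounded P/T-nets. -/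
def tauPPT (b : ℕ) : NetType :=
  ⟨{s | s ≤ b}, {e | ∃ m n, e = BEvent.pair m n ∧ m ≤ b ∧ n ≤ b ∧ (m = 0 ∨ n = 0)}, deltaPT b⟩

/-- The type of `ℤ_{b+1}`-extended `b`-bounded P/T-nets. -/
def tauZPT (b : ℕ) : NetType :=
  ⟨{s | s ≤ b},
   {e | (∃ m n, e = BEvent.pair m n ∧ m ≤ b ∧ n ≤ b ∧ ¬(m = 0 ∧ n = 0)) ∨
        (∃ z, e = BEvent.num z ∧ z ≤ b)}, deltaZPT b⟩

/-- The type of pure `ℤ_{b+1}`-extended `b`-bounded P/T-nets. -/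
def tauZPPT (b : ℕ) : NetType :=
  ⟨{s | s ≤ b},
   {e | (∃ m n, e = BEvent.pair m n ∧ m ≤ b ∧ n ≤ b ∧ ¬(m = 0 ∧ n = 0) ∧ (m = 0 ∨ n = 0)) ∨
        (∃ z, e = BEvent.num z ∧ z ≤ b)}, deltaZPT b⟩

/-- The type of restricted `ℤ_{b+1}`-extended `b`-bounded P/T-nets. -/
def tauRZPT (b : ℕ) : NetType :=
  ⟨{s | s ≤ b},
   {e | (∃ m n, e = BEvent.pair m n ∧ m ≤ b ∧ n ≤ b ∧ ¬(m = 0 ∧ n = 0)) ∨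
        (∃ z, e = BEvent.num z ∧ z ≤ b)}, deltaRZPT b⟩

/-- A (deterministic, initialized) transition system with states `S`, events `E`. -/
structure TS (S E : Type) : Type where
  delta : S → E → Option S
  init : S

def TS.Reachable {S E : Type} (A : TS S E) (s : S) : Prop :=
  Relation.ReflTransGen (fun x y => ∃ e, A.delta x e = some y) A.init s

/-- Every state is reachable from the initial state. -/
def TS.Initialized {S E : Type} (A : TS S E) : Prop :=
  ∀ s, A.Reachable s

/-- A `τ`-region `(sup, sig)` of a TS `A`. -/
structure IsRegion (τ : NetType) {S E : Type} (A : TS S E)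
    (sup : S → ℕ) (sig : E → BEvent) : Prop where
  sup_mem : ∀ s, sup s ∈ τ.states
  sig_mem : ∀ e, sig e ∈ τ.events
  edge : ∀ s e s', A.delta s e = some s' → τ.delta (sup s) (sig e) = some (sup s')

/-- `A` has the `τ`-state separation property. -/
def HasSSP (τ : NetType) {S E : Type} (A : TS S E) : Prop :=
  ∀ s s' : S, s ≠ s' → ∃ sup sig, IsRegion τ A sup sig ∧ sup s ≠ sup s'

/-- `A` has the `τ`-event state separation property. -/
def HasESSP (τ : NetType) {S E : Type} (A : TS S E) : Prop :=
  ∀ (e : E) (s : S), A.delta s e = none →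
    ∃ sup sig, IsRegion τ A sup sig ∧ τ.delta (sup s) (sig e) = none

def Solvable (τ : NetType) {S E : Type} (A : TS S E) : Prop :=
  HasESSP τ A ∧ HasSSP τ A

def sigMinus : BEvent → ℕ
  | .pair m _ => m
  | .num _ => 0

def sigPlus : BEvent → ℕ
  | .pair _ n => n
  | .num _ => 0

def sigAbs : BEvent → ℕ
  | .pair _ _ => 0
  | .num z => z

open Classical in
/-- The linear TS `s₀ −ev 0→ s₁ −ev 1→ … −ev (m-1)→ s_m` on the `m+1` pairwise
distinct states `Fin (m+1)` with initial state `0`. -/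
noncomputable def linTS {E : Type} (m : ℕ) (ev : ℕ → E) : TS (Fin (m + 1)) E where
  init := ⟨0, Nat.succ_pos m⟩
  delta s e :=
    if h : (s : ℕ) < m ∧ ev (s : ℕ) = e then some ⟨(s : ℕ) + 1, Nat.succ_lt_succ h.1⟩
    else none

/-- The linear TS whose sequence of edge labels is the list `l`. -/
noncomputable def linOfList {E : Type} (l : List E) (d : E) : TS (Fin (l.length + 1)) E :=
  linTS l.length (fun i => l.getD i d)

/-- For `τ ∈ {τ_PPT^b, τ_PT^b, τ_ZPT^b, τ_ZPPT^b}`, every `τ`-region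
`(sup, sig)` of a TS `A` satisfies, along every directed labeled path of `A`, the
congruence `sup(qᵢ) ≡ sup(q_{i-1}) − sig⁻(eᵢ) + sig⁺(eᵢ) + |sig(eᵢ)| (mod b+1)`;
consequently a `τ`-region is completely determined by its signature and its value
on the initial state. -/
theorem stmt0 (b : ℕ) (hb : 1 ≤ b) (τ : NetType)
    (hτ : τ = tauPPT b ∨ τ = tauPT b ∨ τ = tauZPT b ∨ τ = tauZPPT b)
    {S E : Type} (A : TS S E) (hinit : A.Initialized) :
    (∀ (sup : S → ℕ) (sig : E → BEvent), IsRegion τ A sup sig →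
      ∀ (ℓ : ℕ) (q : ℕ → S) (ev : ℕ → E),
        (∀ i < ℓ, A.delta (q i) (ev i) = some (q (i + 1))) →
        ∀ i < ℓ,
          (sup (q (i + 1)) : ZMod (b + 1)) =
            (sup (q i) : ZMod (b + 1)) - (sigMinus (sig (ev i)) : ZMod (b + 1)) +
              (sigPlus (sig (ev i)) : ZMod (b + 1)) + (sigAbs (sig (ev i)) : ZMod (b + 1))) ∧
    (∀ (sup1 sup2 : S → ℕ) (sig : E → BEvent),
      IsRegion τ A sup1 sig → IsRegion τ A sup2 sig →
      sup1 A.init = sup2 A.init → sup1 = sup2) := by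
  refine ⟨?_, ?_⟩
  · intro sup sig hR ℓ q ev hpath i hi
    have h := hR.edge _ _ _ (hpath i hi)
    have hZ : deltaZPT b (sup (q i)) (sig (ev i)) = some (sup (q (i + 1))) := by
      rcases hτ with rfl | rfl | rfl | rfl
      · change deltaPT b _ _ = _ at h
        cases hs : sig (ev i) <;> simp_all [deltaPT, deltaZPT] <;> omega
      · change deltaPT b _ _ = _ at h
        cases hs : sig (ev i) <;> simp_all [deltaPT, deltaZPT] <;> omega
      · exact h
      · exact h
    cases hs : sig (ev i) with
    | pair m n =>
      rw [hs] at hZ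
      simp only [deltaZPT] at hZ
      split_ifs at hZ with hc
      rw [← Option.some.inj hZ]
      simp [sigMinus, sigPlus, sigAbs, Nat.cast_sub hc.1]
    | num z =>
      rw [hs] at hZ
      simp only [deltaZPT] at hZ
      rw [← Option.some.inj hZ, ZMod.natCast_mod]
      simp [sigMinus, sigPlus, sigAbs]
  · intro sup1 sup2 sig h1 h2 h0
    funext s
    have hs : A.Reachable s := hinit s
    unfold TS.Reachable at hs
    induction hs with
    | refl => exact h0
    | tail _ hstep ih =>
      obtain ⟨e, he⟩ := hstep
      have a := h1.edge _ _ _ he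
      have c := h2.edge _ _ _ he
      rw [ih, c] at a
      exact (Option.some.inj a).symm

end PNS
end

section
/- Let b ∈ ℕ⁺, let τ ∈ {τ_PPT^b, τ_PT^b, τ_ZPT^b, τ_ZPPT^b} and let A be a TS containing states s₀, s₁, …, s_b and an event e with s₀ −e→ s₁ −e→ … −e→ s_b (b consecutive e-labeled edges). If (sup, sig) is a τ-region of A with sig(e) = (m,n) and m ≠ n, then (m,n) ∈ {(1,0),(0,1)}; moreover, if sig(e) = (0,1) then sup(s₀) = 0 and sup(s_b) = b, and if sig(e) = (1,0) then sup(s₀) = b and sup(s_b) = 0. -/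
namespace PNS

/-- If a TS `A` contains a chain `s₀ −e→ s₁ −e→ … −e→ s_b` of `b`
consecutive `e`-labeled edges and `(sup, sig)` is a `τ`-region of `A` with
`sig(e) = (m,n)` and `m ≠ n`, then `(m,n) ∈ {(1,0),(0,1)}`; moreover `sig(e) = (0,1)`
forces `sup(s₀) = 0` and `sup(s_b) = b`, and `sig(e) = (1,0)` forces `sup(s₀) = b`
and `sup(s_b) = 0`. -/
theorem stmt1 (b : ℕ) (hb : 1 ≤ b) (τ : NetType)
    (hτ : τ = tauPPT b ∨ τ = tauPT b ∨ τ = tauZPT b ∨ τ = tauZPPT b)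
    {S E : Type} (A : TS S E) (hinit : A.Initialized)
    (s : ℕ → S) (e : E) (hchain : ∀ i < b, A.delta (s i) e = some (s (i + 1)))
    (sup : S → ℕ) (sig : E → BEvent) (hreg : IsRegion τ A sup sig) :
    (∀ m n : ℕ, sig e = BEvent.pair m n → m ≠ n →
      (m = 1 ∧ n = 0) ∨ (m = 0 ∧ n = 1)) ∧
    (sig e = BEvent.pair 0 1 → sup (s 0) = 0 ∧ sup (s b) = b) ∧
    (sig e = BEvent.pair 1 0 → sup (s 0) = b ∧ sup (s b) = 0) := by
  have hd : ∀ m n x y, τ.delta x (BEvent.pair m n) = some y → m ≤ x ∧ y + m = x + n := by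
    intro m n x y h
    rcases hτ with rfl | rfl | rfl | rfl <;>
    · simp only [tauPPT, tauPT, tauZPT, tauZPPT, deltaPT, deltaZPT] at h
      split_ifs at h with hc
      simp only [Option.some.injEq] at h
      omega
  have hB : ∀ i, sup (s i) ≤ b := by
    intro i
    have := hreg.sup_mem (s i)
    rcases hτ with rfl | rfl | rfl | rfl <;> exact this
  have step : ∀ m n, sig e = BEvent.pair m n → ∀ i < b,
      m ≤ sup (s i) ∧ sup (s (i + 1)) + m = sup (s i) + n := by
    intro m n h i hi
    have := hreg.edge _ _ _ (hchain i hi)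
    rw [h] at this
    exact hd _ _ _ _ this
  have tot : ∀ m n, sig e = BEvent.pair m n → ∀ i ≤ b,
      sup (s i) + i * m = sup (s 0) + i * n := by
    intro m n h i
    induction i with
    | zero => intro _; simp
    | succ k ih =>
      intro hk
      have h1 := ih (by omega)
      have h2 := (step m n h k (by omega)).2
      linarith
  have h0 := hB 0
  have hbb := hB b
  refine ⟨?_, ?_, ?_⟩
  · intro m n h hne
    have ht := tot m n h b le_rfl
    rcases lt_or_gt_of_ne hne with hlt | hlt
    · right
      obtain ⟨d, rfl⟩ := Nat.exists_eq_add_of_lt hlt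
      have hm := (step _ _ h 0 (by omega)).1
      have hd0 : d = 0 := by
        by_contra hd0
        have : 1 ≤ d := by omega
        nlinarith
      subst hd0
      have : sup (s 0) = 0 := by nlinarith
      omega
    · left
      obtain ⟨d, rfl⟩ := Nat.exists_eq_add_of_lt hlt
      have hm := step _ _ h (b - 1) (by omega)
      have hb1 : b - 1 + 1 = b := by omega
      rw [hb1] at hm
      have hd0 : d = 0 := by
        by_contra hd0
        have : 1 ≤ d := by omega
        nlinarith
      subst hd0
      have : sup (s b) = 0 := by nlinarith
      omega
  · intro h
    have ht := tot _ _ h b le_rfl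
    omega
  · intro h
    have ht := tot _ _ h b le_rfl
    omega

end PNS
end

section
/- Let τ be an arbitrary type of nets and let A = s₀ −e₁→ s₁ −e₂→ … −e_n→ s_n be a linear TS. If a set R of τ-regions of A is a witness of the τ-ESSP of A (i.e., R contains a solving region for every ESSA of A), then R is also a witness of the τ-SSP of A (i.e., R contains a solving region for every SSA of A). -/
namespace PNS

/-- Two states `i < j` of a linear TS cannot agree under all regions of an ESSP witness. -/
theorem lin_not_agree (τ : NetType) {E : Type} (n : ℕ) (ev : ℕ → E)
    (R : Set ((Fin (n + 1) → ℕ) × (E → BEvent)))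
    (hreg : ∀ r ∈ R, IsRegion τ (linTS n ev) r.1 r.2)
    (hessp : ∀ (e : E) (s : Fin (n + 1)), (linTS n ev).delta s e = none →
      ∃ r ∈ R, τ.delta (r.1 s) (r.2 e) = none) :
    ∀ (k i j : ℕ) (hi : i < n + 1) (hj : j < n + 1), i < j → j + k = n →
      (∀ r ∈ R, r.1 ⟨i, hi⟩ = r.1 ⟨j, hj⟩) → False := by
  have hedge : ∀ r ∈ R, ∀ (i : ℕ) (h : i < n),
      τ.delta (r.1 ⟨i, by omega⟩) (r.2 (ev i)) = some (r.1 ⟨i + 1, by omega⟩) := by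
    intro r hr i h
    apply (hreg r hr).edge
    simp [linTS, h]
  have key : ∀ (i j : ℕ) (hi : i < n + 1) (hj : j < n + 1), i < j →
      (∀ r ∈ R, r.1 ⟨i, hi⟩ = r.1 ⟨j, hj⟩) → j < n ∧ ev j = ev i := by
    intro i j hi hj hij hag
    by_contra hc
    obtain ⟨r, hr, hn⟩ := hessp (ev i) ⟨j, hj⟩ (by
      simp only [linTS]
      exact dif_neg hc)
    have h1 := hedge r hr i (by omega)
    rw [hag r hr, hn] at h1
    cases h1
  intro k
  induction k with
  | zero =>
    intro i j hi hj hij hk hag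
    have := (key i j hi hj hij hag).1
    omega
  | succ k ih =>
    intro i j hi hj hij hk hag
    obtain ⟨hjn, he⟩ := key i j hi hj hij hag
    refine ih (i + 1) (j + 1) (by omega) (by omega) (by omega) (by omega) ?_
    intro r hr
    have h1 := hedge r hr i (by omega)
    have h2 := hedge r hr j hjn
    rw [hag r hr, ← he, h2] at h1
    exact (Option.some.inj h1).symm

/-- For an arbitrary type of nets `τ` and a linear TS
`A = s₀ −e₁→ … −e_n→ s_n`, every set `R` of `τ`-regions of `A` that witnesses the
`τ`-ESSP of `A` also witnesses the `τ`-SSP of `A`. -/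
theorem stmt2 (τ : NetType) {E : Type} (n : ℕ) (ev : ℕ → E)
    (hE : ∀ e : E, ∃ i < n, ev i = e)
    (R : Set ((Fin (n + 1) → ℕ) × (E → BEvent)))
    (hreg : ∀ r ∈ R, IsRegion τ (linTS n ev) r.1 r.2)
    (hessp : ∀ (e : E) (s : Fin (n + 1)), (linTS n ev).delta s e = none →
      ∃ r ∈ R, τ.delta (r.1 s) (r.2 e) = none) :
    ∀ s s' : Fin (n + 1), s ≠ s' → ∃ r ∈ R, r.1 s ≠ r.1 s' := by
  intro s s' hne
  by_contra hc
  push Not at hc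
  have hne' : (s : ℕ) ≠ (s' : ℕ) := fun h => hne (Fin.ext h)
  rcases Nat.lt_or_gt_of_ne hne' with h | h
  · exact lin_not_agree τ n ev R hreg hessp (n - s') s s' s.2 s'.2 h (by omega)
      (fun r hr => hc r hr)
  · exact lin_not_agree τ n ev R hreg hessp (n - s) s' s s'.2 s.2 h (by omega)
      (fun r hr => (hc r hr).symm)

end PNS
end

section
/- Let b ∈ ℕ⁺ and τ ∈ {τ_PT^b, τ_PPT^b}. Let U = U(A₀,…,A_n) be a union of linear TS (with terminal states t₀,…,t_n) such that for every event e ∈ E(U) there is a state s ∈ S(U) with δ(s,e) undefined. Then U has the τ-ESSP if and only if the linear joining LJ(U) has the τ-ESSP, and U has the τ-SSP if and only if LJ(U) has the τ-SSP. -/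
namespace PNS

/-- A `τ`-region of the union `U(A i)` of TS with pairwise disjoint state sets
(modeled by a sigma type) and shared events `E`. -/
def UnionRegion (τ : NetType) {ι : Type} {S : ι → Type} {E : Type}
    (A : ∀ i, TS (S i) E) (sup : (Σ i, S i) → ℕ) (sig : E → BEvent) : Prop :=
  (∀ s, sup s ∈ τ.states) ∧ (∀ e, sig e ∈ τ.events) ∧
    ∀ (i : ι) (s : S i) (e : E) (s' : S i),
      (A i).delta s e = some s' → τ.delta (sup ⟨i, s⟩) (sig e) = some (sup ⟨i, s'⟩)

/-- The union has the `τ`-SSP: every SSA (pair of distinct states of the same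
constituent) is solved by a `τ`-region of the union. -/
def UnionHasSSP (τ : NetType) {ι : Type} {S : ι → Type} {E : Type}
    (A : ∀ i, TS (S i) E) : Prop :=
  ∀ (i : ι) (s s' : S i), s ≠ s' →
    ∃ sup sig, UnionRegion τ A sup sig ∧ sup ⟨i, s⟩ ≠ sup ⟨i, s'⟩

/-- The union has the `τ`-ESSP: every ESSA is solved by a `τ`-region of the union. -/
def UnionHasESSP (τ : NetType) {ι : Type} {S : ι → Type} {E : Type}
    (A : ∀ i, TS (S i) E) : Prop :=
  ∀ (e : E) (i : ι) (s : S i), (A i).delta s e = none →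
    ∃ sup sig, UnionRegion τ A sup sig ∧ τ.delta (sup ⟨i, s⟩) (sig e) = none

/-- The linear joining `LJ(U)` of a union of linear TS `A i = linTS (m i) (evs i)`:
fresh states `q₁,…,q_n` (`Sum.inr j` represents `q_{j+1}`), fresh events
`w₁,…,w_n` (`Sum.inr (Sum.inl j)` represents `w_{j+1}`) and `y₁,…,y_n`
(`Sum.inr (Sum.inr j)` represents `y_{j+1}`), and the edges
`t_i −w_{i+1}→ q_{i+1}` and `q_i −y_i→ ι_i`. -/
noncomputable def LJ {n : ℕ} {E : Type} (m : Fin (n + 1) → ℕ)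
    (evs : ∀ _ : Fin (n + 1), ℕ → E) :
    TS ((Σ i : Fin (n + 1), Fin (m i + 1)) ⊕ Fin n) (E ⊕ (Fin n ⊕ Fin n)) where
  init := Sum.inl ⟨⟨0, Nat.succ_pos n⟩, ⟨0, Nat.succ_pos _⟩⟩
  delta s e :=
    match s, e with
    | Sum.inl ⟨i, si⟩, Sum.inl e =>
        Option.map (fun s' => Sum.inl ⟨i, s'⟩) ((linTS (m i) (evs i)).delta si e)
    | Sum.inl ⟨i, si⟩, Sum.inr (Sum.inl j) =>
        if (i : ℕ) = (j : ℕ) ∧ (si : ℕ) = m i then some (Sum.inr j) else none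
    | Sum.inr j, Sum.inr (Sum.inr j') =>
        if (j : ℕ) = (j' : ℕ) then
          some (Sum.inl ⟨⟨(j : ℕ) + 1, Nat.succ_lt_succ j.isLt⟩, ⟨0, Nat.succ_pos _⟩⟩)
        else none
    | _, _ => none

/-- The pure event leading from `a` to `c`. -/
def arrow (a c : ℕ) : BEvent := BEvent.pair (a - c) (c - a)

lemma arrow_delta (b a c : ℕ) (hc : c ≤ b) : deltaPT b a (arrow a c) = some c := by
  simp only [deltaPT, arrow]
  rw [if_pos (by omega)]
  congr 1
  omega

lemma arrow_none (b a c x : ℕ) (h : x < a - c ∨ (a ≤ c ∧ b < x + (c - a))) :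
    deltaPT b x (arrow a c) = none := by
  simp only [deltaPT, arrow]
  rw [if_neg (by omega)]

/-- The extension of a signature of the union to the linear joining. -/
def extSig {n : ℕ} {E : Type} (m : Fin (n + 1) → ℕ)
    (sup : (Σ i : Fin (n + 1), Fin (m i + 1)) → ℕ) (sig : E → BEvent) (f : Fin n → ℕ) :
    E ⊕ (Fin n ⊕ Fin n) → BEvent :=
  Sum.elim sig (Sum.elim
    (fun j => arrow (sup ⟨j.castSucc, Fin.last _⟩) (f j))
    (fun j => arrow (f j) (sup ⟨j.succ, 0⟩)))

lemma ext_region {b : ℕ} {τ : NetType} (hs : τ.states = {s | s ≤ b})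
    (hd : τ.delta = deltaPT b)
    (he : ∀ a c, a ≤ b → c ≤ b → arrow a c ∈ τ.events)
    {n : ℕ} {E : Type} {m : Fin (n + 1) → ℕ} {evs : ∀ _ : Fin (n + 1), ℕ → E}
    {sup : (Σ i : Fin (n + 1), Fin (m i + 1)) → ℕ} {sig : E → BEvent}
    (hU : UnionRegion τ (fun i => linTS (m i) (evs i)) sup sig)
    (f : Fin n → ℕ) (hf : ∀ j, f j ≤ b) :
    IsRegion τ (LJ m evs) (Sum.elim sup f) (extSig m sup sig f) := by
  obtain ⟨h1, h2, h3⟩ := hU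
  have h1' : ∀ s, sup s ≤ b := fun s => by
    have := h1 s
    rwa [hs] at this
  refine ⟨?_, ?_, ?_⟩
  · rintro (s | j)
    · exact h1 s
    · rw [hs]; exact hf j
  · rintro (e | j | j)
    · exact h2 e
    · exact he _ _ (h1' _) (hf _)
    · exact he _ _ (hf _) (h1' _)
  · rintro (⟨i, s⟩ | j) (e | k | k) s' h
    · simp only [LJ, Option.map_eq_some_iff] at h
      obtain ⟨x, hx, rfl⟩ := h
      exact h3 i s e x hx
    · simp only [LJ] at h
      split_ifs at h with hc
      obtain ⟨hc1, hc2⟩ := hc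
      obtain rfl : i = k.castSucc := Fin.ext hc1
      obtain rfl : s = Fin.last _ := Fin.ext hc2
      cases h
      rw [hd]
      exact arrow_delta _ _ _ (hf _)
    · simp [LJ] at h
    · simp [LJ] at h
    · simp [LJ] at h
    · simp only [LJ] at h
      split_ifs at h with hc
      obtain rfl : j = k := Fin.ext hc
      cases h
      rw [hd]
      exact arrow_delta _ _ _ (h1' _)

lemma restrict_region {τ : NetType}
    {n : ℕ} {E : Type} {m : Fin (n + 1) → ℕ} {evs : ∀ _ : Fin (n + 1), ℕ → E}
    {sup : (Σ i : Fin (n + 1), Fin (m i + 1)) ⊕ Fin n → ℕ}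
    {sig : E ⊕ (Fin n ⊕ Fin n) → BEvent} (h : IsRegion τ (LJ m evs) sup sig) :
    UnionRegion τ (fun i => linTS (m i) (evs i)) (fun s => sup (Sum.inl s))
      (fun e => sig (Sum.inl e)) := by
  refine ⟨fun s => h.sup_mem _, fun e => h.sig_mem _, fun i s e s' hs => ?_⟩
  apply h.edge
  simp only at hs
  simp [LJ, hs]

lemma const_region {b : ℕ} {τ : NetType} (hs : τ.states = {s | s ≤ b})
    (hd : τ.delta = deltaPT b)
    (he : ∀ a c, a ≤ b → c ≤ b → arrow a c ∈ τ.events)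
    {n : ℕ} {E : Type} (m : Fin (n + 1) → ℕ) (evs : ∀ _ : Fin (n + 1), ℕ → E)
    (c : Fin (n + 1) → ℕ) (hc : ∀ i, c i ≤ b) :
    UnionRegion τ (fun i => linTS (m i) (evs i)) (fun s => c s.1) (fun _ => arrow 0 0) := by
  refine ⟨fun s => ?_, fun e => he _ _ (Nat.zero_le _) (Nat.zero_le _), fun i s e s' _ => ?_⟩
  · rw [hs]; exact hc _
  · rw [hd]
    simp [deltaPT, arrow, hc i]

lemma linTS_last {E : Type} (m : ℕ) (ev : ℕ → E) (e : E) :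
    (linTS m ev).delta (Fin.last m) e = none := by
  simp [linTS]

lemma linTS_step {E : Type} (m : ℕ) (ev : ℕ → E) (s : Fin (m + 1)) (h : s ≠ Fin.last m) :
    ∃ e s', (linTS m ev).delta s e = some s' := by
  have h' : (s : ℕ) < m := by
    have := s.isLt
    have h2 : (s : ℕ) ≠ m := fun h3 => h (Fin.ext h3)
    omega
  exact ⟨ev s, ⟨s + 1, Nat.succ_lt_succ h'⟩, by simp [linTS, h']⟩

/-- Let `τ ∈ {τ_PT^b, τ_PPT^b}` and let `U` be a union of linear TS
such that every event of `E(U)` occurs somewhere and, for every event `e ∈ E(U)`,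
there is a state at which `e` does not occur. Then `U` has the `τ`-ESSP iff `LJ(U)`
has the `τ`-ESSP, and `U` has the `τ`-SSP iff `LJ(U)` has the `τ`-SSP. -/
theorem stmt3 (b : ℕ) (hb : 1 ≤ b) (τ : NetType) (hτ : τ = tauPT b ∨ τ = tauPPT b)
    {n : ℕ} {E : Type} (m : Fin (n + 1) → ℕ) (evs : ∀ _ : Fin (n + 1), ℕ → E)
    (hocc : ∀ e : E, ∃ (i : Fin (n + 1)) (s s' : Fin (m i + 1)),
      (linTS (m i) (evs i)).delta s e = some s')
    (hundef : ∀ e : E, ∃ (i : Fin (n + 1)) (s : Fin (m i + 1)),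
      (linTS (m i) (evs i)).delta s e = none) :
    (UnionHasESSP τ (fun i => linTS (m i) (evs i)) ↔ HasESSP τ (LJ m evs)) ∧
    (UnionHasSSP τ (fun i => linTS (m i) (evs i)) ↔ HasSSP τ (LJ m evs)) := by
  have hs : τ.states = {s | s ≤ b} := by rcases hτ with rfl | rfl <;> rfl
  have hd : τ.delta = deltaPT b := by rcases hτ with rfl | rfl <;> rfl
  have he : ∀ a c, a ≤ b → c ≤ b → arrow a c ∈ τ.events := by
    intro a c ha hc
    rcases hτ with rfl | rfl
    · exact ⟨_, _, rfl, by omega, by omega⟩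
    · exact ⟨_, _, rfl, by omega, by omega, by omega⟩
  -- every choice of constants on constituents and joining states gives a region
  have hconst : ∀ (c : Fin (n + 1) → ℕ) (f : Fin n → ℕ), (∀ i, c i ≤ b) → (∀ j, f j ≤ b) →
      IsRegion τ (LJ m evs) (Sum.elim (fun s => c s.1) f)
        (extSig m (fun s => c s.1) (fun _ => arrow 0 0) f) :=
    fun c f hc hf => ext_region hs hd he (const_region hs hd he m evs c hc) f hf
  refine ⟨⟨fun H => ?_, fun H => ?_⟩, ⟨fun H => ?_, fun H => ?_⟩⟩
  · rintro (e | k | k) (⟨i, s⟩ | j) h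
    · -- an old event at an old state
      have h' : (linTS (m i) (evs i)).delta s e = none := by
        simpa [LJ] using h
      obtain ⟨sup, sig, hR, hn⟩ := H e i s h'
      exact ⟨_, _, ext_region hs hd he hR (fun _ => 0) (fun _ => Nat.zero_le _), hn⟩
    · -- an old event at a joining state
      obtain ⟨i, s, h'⟩ := hundef e
      obtain ⟨sup, sig, hR, hn⟩ := H e i s h'
      have hb' : sup ⟨i, s⟩ ≤ b := by
        have := hR.1 ⟨i, s⟩
        rwa [hs] at this
      exact ⟨_, _, ext_region hs hd he hR (fun _ => sup ⟨i, s⟩) (fun _ => hb'), hn⟩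
    · -- `w` at an old state
      by_cases hik : i = k.castSucc
      · subst hik
        have hsl : s ≠ Fin.last _ := by
          rintro rfl
          simp [LJ] at h
        obtain ⟨e, s', hes⟩ := linTS_step _ (evs k.castSucc) s hsl
        obtain ⟨sup, sig, hR, hn⟩ := H e k.castSucc (Fin.last _) (linTS_last _ _ _)
        have hne : sup ⟨k.castSucc, s⟩ ≠ sup ⟨k.castSucc, Fin.last _⟩ := by
          intro heq
          have := hR.2.2 k.castSucc s e s' hes
          rw [heq, hn] at this
          cases this
        have hb' : ∀ x, sup x ≤ b := fun x => by
          have := hR.1 x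
          rwa [hs] at this
        rcases lt_or_gt_of_ne hne with hlt | hgt
        · refine ⟨_, _, ext_region hs hd he hR (fun _ => 0) (fun _ => Nat.zero_le _), ?_⟩
          rw [hd]
          exact arrow_none _ _ _ _ (Or.inl (by simpa using hlt))
        · refine ⟨_, _, ext_region hs hd he hR (fun _ => b) (fun _ => le_rfl), ?_⟩
          rw [hd]
          refine arrow_none _ _ _ _ (Or.inr ⟨hb' _, ?_⟩)
          have := hb' ⟨k.castSucc, Fin.last _⟩
          simp only [Sum.elim_inl]
          omega
      · refine ⟨_, _, hconst (fun x => if x = i then b else 0) (fun _ => b)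
          (fun x => by split_ifs <;> omega) (fun _ => le_rfl), ?_⟩
        rw [hd]
        apply arrow_none
        have : k.castSucc ≠ i := fun h => hik h.symm
        simp [this]
        omega
    · refine ⟨_, _, hconst (fun _ => 0) (fun _ => b)
          (fun _ => Nat.zero_le _) (fun _ => le_rfl), ?_⟩
      rw [hd]
      apply arrow_none
      simp
      omega
    · refine ⟨_, _, hconst (fun _ => b) (fun _ => 0)
          (fun _ => le_rfl) (fun _ => Nat.zero_le _), ?_⟩
      rw [hd]
      apply arrow_none
      simp
      omega
    · have hjk : k ≠ j := by
        rintro rfl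
        simp [LJ] at h
      refine ⟨_, _, hconst (fun _ => b) (fun x => if x = j then b else 0)
          (fun _ => le_rfl) (fun x => by split_ifs <;> omega), ?_⟩
      rw [hd]
      apply arrow_none
      simp [hjk]
      omega
  · intro e i s h
    have h' : (LJ m evs).delta (Sum.inl ⟨i, s⟩) (Sum.inl e) = none := by
      simp only at h
      simp [LJ, h]
    obtain ⟨sup, sig, hR, hn⟩ := H _ _ h'
    exact ⟨_, _, restrict_region hR, hn⟩
  · rintro (⟨i, s⟩ | j) (⟨i', s'⟩ | j') hne
    · by_cases hii : i = i'
      · subst hii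
        obtain ⟨sup, sig, hR, hn⟩ := H i s s' (by rintro rfl; exact hne rfl)
        exact ⟨_, _, ext_region hs hd he hR (fun _ => 0) (fun _ => Nat.zero_le _), hn⟩
      · refine ⟨_, _, hconst (fun x => if x = i then b else 0) (fun _ => b)
          (fun x => by split_ifs <;> omega) (fun _ => le_rfl), ?_⟩
        have : i' ≠ i := fun h => hii h.symm
        simp [this]
        omega
    · refine ⟨_, _, hconst (fun _ => 0) (fun _ => b)
          (fun _ => Nat.zero_le _) (fun _ => le_rfl), ?_⟩
      simp
      omega
    · refine ⟨_, _, hconst (fun _ => 0) (fun _ => b)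
          (fun _ => Nat.zero_le _) (fun _ => le_rfl), ?_⟩
      simp
      omega
    · have hjj : j' ≠ j := by
        rintro rfl
        exact hne rfl
      refine ⟨_, _, hconst (fun _ => b) (fun x => if x = j then b else 0)
          (fun _ => le_rfl) (fun x => by split_ifs <;> omega), ?_⟩
      simp [hjj]
      omega
  · intro i s s' hne
    obtain ⟨sup, sig, hR, hn⟩ := H (Sum.inl ⟨i, s⟩) (Sum.inl ⟨i, s'⟩) (by
      intro h
      simp only [Sum.inl.injEq, Sigma.mk.injEq, heq_eq_eq, true_and] at h
      exact hne h)
    exact ⟨_, _, restrict_region hR, hn⟩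

end PNS
end

section
/- Let b ∈ ℕ⁺ and τ ∈ {τ_ZPT^b, τ_ZPPT^b}. Let U = U(A₀,…,A_n) be a union of (initialized) TS such that for every event e ∈ E(U) there is a state s ∈ S(U) with δ(s,e) undefined. Then U has the τ-ESSP if and only if the joining J(U) has the τ-ESSP, and U has the τ-SSP if and only if J(U) has the τ-SSP. -/
namespace PNS

/-- The joining `J(U)` of a union of (initialized) TS: a fresh initial state `q₀`
and further fresh states `q₁,…,q_n` (`Sum.inr i` represents `q_i`), fresh events
`w₁,…,w_n` (`Sum.inr (Sum.inl j)` represents `w_{j+1}`) and `y₀,…,y_n`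
(`Sum.inr (Sum.inr i)` represents `y_i`), together with the edges
`q_i −w_{i+1}→ q_{i+1}` and `q_i −y_i→ ι_i`. -/
def JoinTS {n : ℕ} {S : Fin (n + 1) → Type} {E : Type} (A : ∀ i, TS (S i) E) :
    TS ((Σ i, S i) ⊕ Fin (n + 1)) (E ⊕ (Fin n ⊕ Fin (n + 1))) where
  init := Sum.inr ⟨0, Nat.succ_pos n⟩
  delta s e :=
    match s, e with
    | Sum.inl ⟨i, si⟩, Sum.inl e =>
        Option.map (fun s' => Sum.inl ⟨i, s'⟩) ((A i).delta si e)
    | Sum.inr i, Sum.inr (Sum.inl j) =>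
        if (i : ℕ) = (j : ℕ) then some (Sum.inr ⟨(j : ℕ) + 1, Nat.succ_lt_succ j.isLt⟩)
        else none
    | Sum.inr i, Sum.inr (Sum.inr j) =>
        if i = j then some (Sum.inl ⟨i, (A i).init⟩) else none
    | _, _ => none

/-- The group event leading from `x` to `y` modulo `b+1`. -/
def diffEv (b x y : ℕ) : BEvent := .num ((y + (b + 1) - x) % (b + 1))

theorem diffEv_delta {b x y : ℕ} (hx : x ≤ b) (hy : y ≤ b) :
    deltaZPT b x (diffEv b x y) = some y := by
  simp only [diffEv, deltaZPT, Nat.add_mod_mod]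
  rw [show x + (y + (b + 1) - x) = y + (b + 1) by omega, Nat.add_mod_right,
    Nat.mod_eq_of_lt (by omega)]

theorem region_ext {τ : NetType} {n : ℕ} {S : Fin (n + 1) → Type} {E : Type}
    {A : ∀ i, TS (S i) E} {sup : (Σ i, S i) → ℕ} {sig : E → BEvent}
    (h : UnionRegion τ A sup sig) (q : Fin (n + 1) → ℕ) (hq : ∀ i, q i ∈ τ.states)
    (w : Fin n → BEvent) (hw : ∀ j, w j ∈ τ.events)
    (hwd : ∀ j : Fin n, τ.delta (q j.castSucc) (w j) = some (q j.succ))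
    (y : Fin (n + 1) → BEvent) (hy : ∀ j, y j ∈ τ.events)
    (hyd : ∀ j, τ.delta (q j) (y j) = some (sup ⟨j, (A j).init⟩)) :
    IsRegion τ (JoinTS A) (Sum.elim sup q) (Sum.elim sig (Sum.elim w y)) := by
  obtain ⟨h1, h2, h3⟩ := h
  refine ⟨?_, ?_, ?_⟩
  · rintro (s | i)
    · exact h1 s
    · exact hq i
  · rintro (e | j | j)
    · exact h2 e
    · exact hw j
    · exact hy j
  · rintro (⟨i, s⟩ | i) (e | j | j) s' hs
    · simp only [JoinTS, Option.map_eq_some_iff] at hs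
      obtain ⟨t, ht, rfl⟩ := hs
      exact h3 i s e t ht
    · simp [JoinTS] at hs
    · simp [JoinTS] at hs
    · simp [JoinTS] at hs
    · simp only [JoinTS] at hs
      split_ifs at hs with hij
      obtain rfl : i = j.castSucc := Fin.ext hij
      cases hs
      exact hwd j
    · simp only [JoinTS] at hs
      split_ifs at hs with hij
      subst hij
      cases hs
      exact hyd i

theorem region_res {τ : NetType} {n : ℕ} {S : Fin (n + 1) → Type} {E : Type}
    {A : ∀ i, TS (S i) E} {sup : (Σ i, S i) ⊕ Fin (n + 1) → ℕ}
    {sig : E ⊕ (Fin n ⊕ Fin (n + 1)) → BEvent}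
    (h : IsRegion τ (JoinTS A) sup sig) :
    UnionRegion τ A (fun s => sup (.inl s)) (fun e => sig (.inl e)) := by
  refine ⟨fun s => h.sup_mem _, fun e => h.sig_mem _, fun i s e s' hs => ?_⟩
  exact h.edge (.inl ⟨i, s⟩) (.inl e) (.inl ⟨i, s'⟩) (by simp [JoinTS, hs])

theorem main_aux (b : ℕ) (hb : 1 ≤ b) (τ : NetType) (hst : τ.states = {s | s ≤ b})
    (hde : τ.delta = deltaZPT b) (hnum : ∀ z, z ≤ b → BEvent.num z ∈ τ.events)
    (hpair : BEvent.pair 0 b ∈ τ.events)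
    {n : ℕ} {S : Fin (n + 1) → Type} {E : Type} (A : ∀ i, TS (S i) E)
    (hundef : ∀ e : E, ∃ (i : Fin (n + 1)) (s : S i), (A i).delta s e = none) :
    (UnionHasESSP τ A ↔ HasESSP τ (JoinTS A)) ∧
    (UnionHasSSP τ A ↔ HasSSP τ (JoinTS A)) := by
  have hst' : ∀ x, x ∈ τ.states ↔ x ≤ b := fun x => by rw [hst]; rfl
  have hdm : ∀ x y, diffEv b x y ∈ τ.events := fun x y =>
    hnum _ (Nat.lt_succ_iff.mp (Nat.mod_lt _ (Nat.succ_pos b)))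
  -- extension by group events
  have ext : ∀ (sup : (Σ i, S i) → ℕ) (sig : E → BEvent), UnionRegion τ A sup sig →
      ∀ q : Fin (n + 1) → ℕ, (∀ i, q i ≤ b) → ∃ f,
        IsRegion τ (JoinTS A) (Sum.elim sup q) (Sum.elim sig f) := by
    intro sup sig h q hq
    refine ⟨_, region_ext h q (fun i => (hst' _).2 (hq i))
      (fun j => diffEv b (q j.castSucc) (q j.succ)) (fun j => hdm _ _) (fun j => ?_)
      (fun j => diffEv b (q j) (sup ⟨j, (A j).init⟩)) (fun j => hdm _ _) (fun j => ?_)⟩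
    · rw [hde]; exact diffEv_delta (hq _) (hq _)
    · rw [hde]; exact diffEv_delta (hq _) ((hst' _).1 (h.1 _))
  -- regions constant on every constituent
  have const : ∀ c : Fin (n + 1) → ℕ, (∀ i, c i ≤ b) →
      UnionRegion τ A (fun s => c s.1) (fun _ => .num 0) := by
    intro c hc
    refine ⟨fun s => (hst' _).2 (hc _), fun _ => hnum 0 (Nat.zero_le _), ?_⟩
    intro i s e s' _
    rw [hde]
    simp only [deltaZPT, add_zero]
    rw [Nat.mod_eq_of_lt (Nat.lt_succ_of_le (hc i))]
  -- the region isolating `q_k`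
  have iso : ∀ k : Fin (n + 1), ∃ sup sig, IsRegion τ (JoinTS A) sup sig ∧
      (∀ s, s ≠ Sum.inr k → sup s = b) ∧
      (∀ j : Fin n, j.castSucc = k → sig (.inr (.inl j)) = .pair 0 b) ∧
      sig (.inr (.inr k)) = .pair 0 b := by
    intro k
    set q : Fin (n + 1) → ℕ := fun i => if i = k then 0 else b with hqdef
    have hq : ∀ i, q i ≤ b := fun i => by simp only [hqdef]; split_ifs <;> omega
    refine ⟨_, _, region_ext (const (fun _ => b) (fun _ => le_rfl)) q
      (fun i => (hst' _).2 (hq i))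
      (fun j => if j.castSucc = k then .pair 0 b else diffEv b (q j.castSucc) (q j.succ))
      (fun j => ?_) (fun j => ?_)
      (fun j => if j = k then .pair 0 b else diffEv b (q j) b)
      (fun j => ?_) (fun j => ?_), ?_, ?_, ?_⟩
    · split_ifs
      · exact hpair
      · exact hdm _ _
    · rw [hde]
      split_ifs with hj
      · have h1 : q j.castSucc = 0 := by simp [hqdef, hj]
        have h2 : q j.succ = b := by
          simp only [hqdef]
          rw [if_neg]
          rintro rfl
          exact absurd (congrArg Fin.val hj) (by simp)
        rw [h1, h2]; simp [deltaZPT]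
      · exact diffEv_delta (hq _) (hq _)
    · split_ifs
      · exact hpair
      · exact hdm _ _
    · rw [hde]
      split_ifs with hj
      · have h1 : q j = 0 := by simp [hqdef, hj]
        rw [h1]; simp [deltaZPT]
      · exact diffEv_delta (hq _) le_rfl
    · rintro (s | i) hs
      · rfl
      · have : i ≠ k := fun h => hs (by rw [h])
        simp [hqdef, this]
    · intro j hj
      simp [hj]
    · simp
  have pnone : τ.delta b (.pair 0 b) = none := by
    rw [hde]; simp only [deltaZPT]; rw [if_neg]; omega
  refine ⟨⟨fun hU => ?_, fun hJ e i s hs => ?_⟩, ⟨fun hU => ?_, fun hJ i s s' hs => ?_⟩⟩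
  · rintro (e | j | j) s hs
    · rcases s with ⟨i, s⟩ | i
      · have hs' : (A i).delta s e = none := by simpa [JoinTS] using hs
        obtain ⟨sup, sig, h, hn⟩ := hU e i s hs'
        obtain ⟨f, hf⟩ := ext sup sig h (fun _ => 0) (fun _ => Nat.zero_le _)
        exact ⟨_, _, hf, hn⟩
      · obtain ⟨k, t, ht⟩ := hundef e
        obtain ⟨sup, sig, h, hn⟩ := hU e k t ht
        obtain ⟨f, hf⟩ := ext sup sig h (fun _ => sup ⟨k, t⟩) (fun _ => (hst' _).1 (h.1 _))
        exact ⟨_, _, hf, hn⟩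
    · obtain ⟨sup, sig, h, h1, h2, -⟩ := iso j.castSucc
      refine ⟨sup, sig, h, ?_⟩
      rw [h1 s (by rintro rfl; simp [JoinTS] at hs), h2 j rfl, pnone]
    · obtain ⟨sup, sig, h, h1, -, h2⟩ := iso j
      refine ⟨sup, sig, h, ?_⟩
      rw [h1 s (by rintro rfl; simp [JoinTS] at hs), h2, pnone]
  · obtain ⟨sup, sig, h, hn⟩ := hJ (.inl e) (.inl ⟨i, s⟩) (by simp [JoinTS, hs])
    exact ⟨_, _, region_res h, hn⟩
  · rintro (⟨i, s⟩ | i) (⟨j, t⟩ | j) hne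
    · by_cases hij : i = j
      · subst hij
        obtain ⟨sup, sig, h, hn⟩ := hU i s t (fun h => hne (by rw [h]))
        obtain ⟨f, hf⟩ := ext sup sig h (fun _ => 0) (fun _ => Nat.zero_le _)
        exact ⟨_, _, hf, hn⟩
      · obtain ⟨f, hf⟩ := ext _ _ (const (fun k => if k = i then 0 else 1)
          (fun k => by split_ifs <;> omega)) (fun _ => 0) (fun _ => Nat.zero_le _)
        exact ⟨_, _, hf, by simp [Ne.symm hij]⟩
    · obtain ⟨f, hf⟩ := ext _ _ (const (fun _ => 1) (fun _ => hb)) (fun _ => 0)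
        (fun _ => Nat.zero_le _)
      exact ⟨_, _, hf, by simp⟩
    · obtain ⟨f, hf⟩ := ext _ _ (const (fun _ => 1) (fun _ => hb)) (fun _ => 0)
        (fun _ => Nat.zero_le _)
      exact ⟨_, _, hf, by simp⟩
    · have hij : j ≠ i := fun h => hne (by rw [h])
      obtain ⟨f, hf⟩ := ext _ _ (const (fun _ => 1) (fun _ => hb))
        (fun k => if k = i then 0 else 1) (fun k => by split_ifs <;> omega)
      exact ⟨_, _, hf, by simp [hij]⟩
  · obtain ⟨sup, sig, h, hn⟩ := hJ (.inl ⟨i, s⟩) (.inl ⟨i, s'⟩) (by simpa using hs)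
    exact ⟨_, _, region_res h, hn⟩

/-- Let `τ ∈ {τ_ZPT^b, τ_ZPPT^b}` and let `U` be a union of
initialized TS such that every event of `E(U)` occurs somewhere and, for every
event `e ∈ E(U)`, there is a state at which `e` does not occur. Then `U` has the
`τ`-ESSP iff `J(U)` has the `τ`-ESSP, and `U` has the `τ`-SSP iff `J(U)` has the
`τ`-SSP. -/
theorem stmt4 (b : ℕ) (hb : 1 ≤ b) (τ : NetType) (hτ : τ = tauZPT b ∨ τ = tauZPPT b)
    {n : ℕ} {S : Fin (n + 1) → Type} {E : Type} (A : ∀ i, TS (S i) E)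
    (hinit : ∀ i, (A i).Initialized)
    (hocc : ∀ e : E, ∃ (i : Fin (n + 1)) (s s' : S i), (A i).delta s e = some s')
    (hundef : ∀ e : E, ∃ (i : Fin (n + 1)) (s : S i), (A i).delta s e = none) :
    (UnionHasESSP τ A ↔ HasESSP τ (JoinTS A)) ∧
    (UnionHasSSP τ A ↔ HasSSP τ (JoinTS A)) := by
  rcases hτ with rfl | rfl
  · refine main_aux b hb (tauZPT b) rfl rfl (fun z hz => Or.inr ⟨z, rfl, hz⟩)
      (Or.inl ⟨0, b, rfl, Nat.zero_le _, le_rfl, by omega⟩) A hundef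
  · refine main_aux b hb (tauZPPT b) rfl rfl (fun z hz => Or.inr ⟨z, rfl, hz⟩)
      (Or.inl ⟨0, b, rfl, Nat.zero_le _, le_rfl, by omega, Or.inl rfl⟩) A hundef

end PNS
end

section
/- Let b ∈ ℕ⁺, τ ∈ {τ_PT^b, τ_PPT^b}, and let U = U(A₀,…,A_n) be a union of linear TS in which every event is 1-consistent or b-consistent. Let a ∈ E(U) be thinly distributed, let i ∈ {0,…,n} and let q ∈ Sᵢ be a state with δᵢ(q,a) undefined. If one of the following two conditions holds, then the ESSA (a,q) is solved by some τ-region of U: (1) a ∉ Eᵢ, or a ∈ Eᵢ and q occurs after a in Aᵢ; (2) a ∈ Eᵢ, a occurs after q in Aᵢ, and there is an event x ∈ Eᵢ ∖ {a} such that Aᵢ contains a state z with an incoming x-labeled edge and an outgoing a-labeled edge, x is thinly distributed, for every j ∈ {0,…,n} with a, x ∈ E_j the event x does not occur after a in A_j, and x is 1-consistent whenever a is b-consistent. -/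
namespace PNS

/-- `[l, r)` is a maximal block of consecutive `e`-labeled edges of the linear TS
with `m` edges labeled by `ev 0, …, ev (m-1)`. -/
def IsBlock {E : Type} (m : ℕ) (ev : ℕ → E) (e : E) (l r : ℕ) : Prop :=
  l < r ∧ r ≤ m ∧ (∀ j, l ≤ j → j < r → ev j = e) ∧
    (l = 0 ∨ ev (l - 1) ≠ e) ∧ (r = m ∨ ev r ≠ e)

/-- `e` is `c`-consistent in the union of the linear TS `linTS (ms i) (evs i)`:
every maximal block of consecutive `e`-labeled edges has length exactly `c`. -/
def ConsistentIn {ι E : Type} (ms : ι → ℕ) (evs : ι → ℕ → E) (c : ℕ) (e : E) : Prop :=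
  ∀ (i : ι) (l r : ℕ), IsBlock (ms i) (evs i) e l r → r - l = c

/-- `e` occurs in the linear TS with `m` edges labeled by `ev`. -/
def OccursIn {E : Type} (m : ℕ) (ev : ℕ → E) (e : E) : Prop :=
  ∃ j < m, ev j = e

/-- `e` is thinly distributed: it is `1`- or `b`-consistent and every constituent
in which it occurs contains exactly one maximal block of `e`. -/
def ThinlyDistributed {ι E : Type} (b : ℕ) (ms : ι → ℕ) (evs : ι → ℕ → E) (e : E) : Prop :=
  (ConsistentIn ms evs 1 e ∨ ConsistentIn ms evs b e) ∧
    ∀ i : ι, OccursIn (ms i) (evs i) e →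
      ∃! p : ℕ × ℕ, IsBlock (ms i) (evs i) e p.1 p.2

theorem exists_block {E : Type} (m : ℕ) (ev : ℕ → E) (e : E) (k : ℕ) (hk : k < m)
    (he : ev k = e) : ∃ l r, IsBlock m ev e l r ∧ l ≤ k ∧ k < r := by
  classical
  have h1 : ∃ l, l ≤ k ∧ ∀ j, l ≤ j → j ≤ k → ev j = e :=
    ⟨k, le_rfl, fun j h h' => by rw [le_antisymm h' h]; exact he⟩
  have h2 : ∃ r, k < r ∧ (r = m ∨ ev r ≠ e) := ⟨m, hk, Or.inl rfl⟩
  refine ⟨Nat.find h1, Nat.find h2, ⟨?_, ?_, ?_, ?_, ?_⟩, (Nat.find_spec h1).1,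
    (Nat.find_spec h2).1⟩
  · exact lt_of_le_of_lt (Nat.find_spec h1).1 (Nat.find_spec h2).1
  · exact Nat.find_min' h2 ⟨hk, Or.inl rfl⟩
  · intro j hl hr
    by_cases hjk : j ≤ k
    · exact (Nat.find_spec h1).2 j hl hjk
    · have := Nat.find_min h2 hr
      by_contra hne
      exact this ⟨by omega, Or.inr hne⟩
  · by_contra hcon
    push Not at hcon
    obtain ⟨h0, hev⟩ := hcon
    have hlt : Nat.find h1 - 1 < Nat.find h1 := by omega
    have hs := Nat.find_spec h1
    refine Nat.find_min h1 hlt ⟨by omega, ?_⟩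
    intro j hj hjk
    by_cases hjl : Nat.find h1 ≤ j
    · exact hs.2 j hjl hjk
    · have : j = Nat.find h1 - 1 := by omega
      rw [this]; exact hev
  · exact (Nat.find_spec h2).2

theorem thin_interval {ι E : Type} (b : ℕ) (ms : ι → ℕ) (evs : ι → ℕ → E) (e : E)
    (h : ThinlyDistributed b ms evs e) (c : ℕ) (hc : ConsistentIn ms evs c e) (j : ι)
    (ho : OccursIn (ms j) (evs j) e) :
    ∃ l, l + c ≤ ms j ∧ ∀ k, k < ms j → (evs j k = e ↔ l ≤ k ∧ k < l + c) := by
  obtain ⟨⟨l, r⟩, hp, huniq⟩ := h.2 j ho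
  have hlen := hc j l r hp
  have hb1 := hp.1
  have hb2 := hp.2.1
  have hb3 := hp.2.2.1
  simp only at hb1 hb2 hb3
  refine ⟨l, by omega, fun k hk => ⟨fun hev => ?_, fun hh => hb3 k hh.1 (by omega)⟩⟩
  obtain ⟨l', r', hbl, h1, h2⟩ := exists_block (ms j) (evs j) e k hk hev
  have := huniq (l', r') hbl
  simp only [Prod.mk.injEq] at this
  omega

/-- Progress function of a thinly distributed event, with weight `w`. -/
theorem thin_progress {ι E : Type} (b : ℕ) (ms : ι → ℕ) (evs : ι → ℕ → E)
    (e : E) (h : ThinlyDistributed b ms evs e) (c w : ℕ) (hcw : c = 1 ∧ w = b ∨ c = b ∧ w = 1)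
    (hc : ConsistentIn ms evs c e) :
    ∃ B : ι → ℕ → ℕ, (∀ j s, B j s ≤ b) ∧ (∀ j s t, s ≤ t → B j s ≤ B j t) ∧
      (∀ j s, s < ms j → evs j s = e → B j (s + 1) = B j s + w) ∧
      (∀ j s, s < ms j → evs j s ≠ e → B j (s + 1) = B j s) ∧
      (∀ j, ¬ OccursIn (ms j) (evs j) e → ∀ s, B j s = 0) ∧
      (∀ j s, OccursIn (ms j) (evs j) e → (∀ k, s ≤ k → k < ms j → evs j k ≠ e) → s ≤ ms j →
        B j s = b) ∧
      (∀ j s, (∀ k, k < s → k < ms j → evs j k ≠ e) → B j s = 0) ∧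
      (∀ j p k r, p ≤ k → k ≤ r → r < ms j → evs j p = e → evs j r = e → evs j k = e) := by
  classical
  have hI := thin_interval b ms evs e h c hc
  choose! L hL1 hL2 using hI
  have hB : ∀ t, t ≤ c → w * t ≤ b := by
    intro t ht
    rcases hcw with ⟨h1, h2⟩ | ⟨h1, h2⟩
    · subst h1 h2; nlinarith
    · subst h1 h2; omega
  have hwc : w * c = b := by
    rcases hcw with ⟨h1, h2⟩ | ⟨h1, h2⟩ <;> subst h1 h2 <;> simp
  refine ⟨fun j s => if OccursIn (ms j) (evs j) e then w * min (s - L j) c else 0,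
    ?_, ?_, ?_, ?_, ?_, ?_, ?_, ?_⟩
  · intro j s
    dsimp only
    split_ifs
    · exact hB _ (min_le_right _ _)
    · omega
  · intro j s t hst
    dsimp only
    split_ifs
    · apply Nat.mul_le_mul_left; omega
    · omega
  · intro j s hs hev
    have ho : OccursIn (ms j) (evs j) e := ⟨s, hs, hev⟩
    have := (hL2 j ho s hs).1 hev
    simp only [if_pos ho]
    rw [show min (s + 1 - L j) c = min (s - L j) c + 1 by omega, Nat.mul_add, Nat.mul_one]
  · intro j s hs hev
    dsimp only
    split_ifs with ho
    · have := mt (hL2 j ho s hs).2 hev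
      rw [show min (s + 1 - L j) c = min (s - L j) c by omega]
    · rfl
  · intro j ho s
    simp only [if_neg ho]
  · intro j s ho hk hs
    simp only [if_pos ho]
    have h1 := hL1 j ho
    rw [show min (s - L j) c = c from ?_, hwc]
    by_contra hlt
    have hc0 : 0 < c := by omega
    have : s < L j + c := by omega
    refine hk (L j + c - 1) (by omega) (by omega) ?_
    exact (hL2 j ho _ (by omega)).2 ⟨by omega, by omega⟩
  · intro j s hk
    dsimp only
    split_ifs with ho
    · have h1 := hL1 j ho
      rw [show min (s - L j) c = 0 from ?_, Nat.mul_zero]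
      by_contra hlt
      refine hk (L j) (by omega) (by omega) ?_
      exact (hL2 j ho _ (by omega)).2 ⟨by omega, by omega⟩
    · rfl
  · intro j p k r hpk hkr hr hp he
    have ho : OccursIn (ms j) (evs j) e := ⟨r, hr, he⟩
    have h1 := (hL2 j ho p (by omega)).1 hp
    have h2 := (hL2 j ho r hr).1 he
    exact (hL2 j ho k (by omega)).2 ⟨by omega, by omega⟩

theorem linTS_delta {E : Type} {m : ℕ} {ev : ℕ → E} {s s' : Fin (m + 1)} {e : E}
    (h : (linTS m ev).delta s e = some s') :
    (s : ℕ) < m ∧ ev s = e ∧ (s' : ℕ) = s + 1 := by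
  unfold linTS at h
  dsimp only at h
  split_ifs at h with hc
  simp only [Option.some.injEq] at h
  exact ⟨hc.1, hc.2, by rw [← h]⟩

theorem linTS_delta_none {E : Type} {m : ℕ} {ev : ℕ → E} {s : Fin (m + 1)} {e : E}
    (h : (linTS m ev).delta s e = none) (hs : (s : ℕ) < m) : ev s ≠ e := by
  intro he
  unfold linTS at h
  dsimp only at h
  rw [dif_pos ⟨hs, he⟩] at h
  cases h

/-- Build a region from integer-style data. -/
theorem region_of {ι E : Type} (b : ℕ) (τ : NetType) (hτ : τ = tauPT b ∨ τ = tauPPT b)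
    (ms : ι → ℕ) (evs : ι → ℕ → E) (f : ι → ℕ → ℕ) (mi pl : E → ℕ)
    (hf : ∀ j s, s ≤ ms j → f j s ≤ b) (hm : ∀ e, mi e ≤ b) (hp : ∀ e, pl e ≤ b)
    (hpure : ∀ e, mi e = 0 ∨ pl e = 0)
    (hstep : ∀ j s, s < ms j → mi (evs j s) ≤ f j s ∧
      f j (s + 1) + mi (evs j s) = f j s + pl (evs j s))
    (a : E) (i : ι) (q : Fin (ms i + 1)) (hq : f i q < mi a) :
    ∃ sup sig, UnionRegion τ (fun j => linTS (ms j) (evs j)) sup sig ∧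
      τ.delta (sup ⟨i, q⟩) (sig a) = none := by
  have hd : τ.delta = deltaPT b := by rcases hτ with h | h <;> rw [h] <;> rfl
  have hst : ∀ s, s ≤ b → s ∈ τ.states := by
    rcases hτ with h | h <;> rw [h] <;> exact fun s hs => hs
  refine ⟨fun p => f p.1 p.2, fun e => BEvent.pair (mi e) (pl e), ⟨?_, ?_, ?_⟩, ?_⟩
  · intro s
    exact hst _ (hf _ _ (by omega))
  · intro e
    rcases hτ with h | h <;> rw [h]
    · exact ⟨_, _, rfl, hm e, hp e⟩
    · exact ⟨_, _, rfl, hm e, hp e, hpure e⟩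
  · intro j s e s' h
    obtain ⟨h1, h2, h3⟩ := linTS_delta h
    have h4 := hstep j s h1
    have h5 := hf j (s + 1) (by omega)
    rw [h2] at h4
    rw [hd]
    simp only [deltaPT, h3]
    rw [if_pos ⟨h4.1, by omega⟩]
    congr 1
    omega
  · rw [hd]
    simp only [deltaPT]
    rw [if_neg]
    omega

/-- Let `τ ∈ {τ_PT^b, τ_PPT^b}` and let `U` be a union of linear TS
in which every event is `1`-consistent or `b`-consistent.  If `a ∈ E(U)` is thinly
distributed, `q` is a state of the constituent `A i` at which `a` does not occur, and
condition (1) or condition (2) of the statement holds, then the ESSA `(a, q)` is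
solved by some `τ`-region of `U`. -/
theorem stmt5 (b : ℕ) (hb : 1 ≤ b) (τ : NetType) (hτ : τ = tauPT b ∨ τ = tauPPT b)
    {ι E : Type} (ms : ι → ℕ) (evs : ι → ℕ → E)
    (hcons : ∀ e : E, ConsistentIn ms evs 1 e ∨ ConsistentIn ms evs b e)
    (a : E) (ha : ThinlyDistributed b ms evs a)
    (haocc : ∃ i : ι, OccursIn (ms i) (evs i) a)
    (i : ι) (q : Fin (ms i + 1)) (hq : (linTS (ms i) (evs i)).delta q a = none)
    (hcase :
      -- (1): `a ∉ Eᵢ`, or `a ∈ Eᵢ` and `q` occurs after `a` in `Aᵢ`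
      ((¬ OccursIn (ms i) (evs i) a) ∨
        (OccursIn (ms i) (evs i) a ∧ ∃ idx < ms i, evs i idx = a ∧ idx + 1 < (q : ℕ))) ∨
      -- (2): `a ∈ Eᵢ`, `a` occurs after `q`, and a suitable event `x` exists
      (OccursIn (ms i) (evs i) a ∧
        (∃ idx < ms i, evs i idx = a ∧ (q : ℕ) ≤ idx) ∧
        ∃ x : E, x ≠ a ∧
          (∃ idx, 1 ≤ idx ∧ idx < ms i ∧ evs i (idx - 1) = x ∧ evs i idx = a) ∧
          ThinlyDistributed b ms evs x ∧
          (∀ j : ι, OccursIn (ms j) (evs j) a → OccursIn (ms j) (evs j) x →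
            ¬ ∃ p r, p < ms j ∧ r < ms j ∧ evs j p = a ∧ evs j r = x ∧ p < r) ∧
          (ConsistentIn ms evs b a → ConsistentIn ms evs 1 x))) :
    ∃ sup sig, UnionRegion τ (fun j => linTS (ms j) (evs j)) sup sig ∧
      τ.delta (sup ⟨i, q⟩) (sig a) = none := by
  classical
  have hqne : (q : ℕ) < ms i → evs i q ≠ a := linTS_delta_none hq
  have hqle : (q : ℕ) ≤ ms i := by omega
  rcases hcase with h1 | ⟨hoa, ⟨idx, hidx, hidxa, hqidx⟩, x, hxa, ⟨z, hz1, hz, hzx, hza⟩, hxt,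
    hord, hxc⟩
  · obtain ⟨c, w, hcw, hc⟩ : ∃ c w, (c = 1 ∧ w = b ∨ c = b ∧ w = 1) ∧ ConsistentIn ms evs c a := by
      rcases hcons a with h | h
      · exact ⟨1, b, Or.inl ⟨rfl, rfl⟩, h⟩
      · exact ⟨b, 1, Or.inr ⟨rfl, rfl⟩, h⟩
    obtain ⟨B, hB, hmono, hs1, hs2, hno, hend, hstart, hconv⟩ :=
      thin_progress b ms evs a ha c w hcw hc
    have hw : 1 ≤ w ∧ w ≤ b := by omega
    refine region_of b τ hτ ms evs
      (fun j s => if OccursIn (ms j) (evs j) a then b - B j s else 0)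
      (fun e => if e = a then w else 0) (fun _ => 0) ?_ ?_ ?_ ?_ ?_ a i q ?_
    · intro j s _; split_ifs <;> omega
    · intro e; split_ifs <;> omega
    · intro e; omega
    · intro e; right; rfl
    · intro j s hs
      have hb1 := hB j (s + 1)
      by_cases he : evs j s = a
      · have ho : OccursIn (ms j) (evs j) a := ⟨s, hs, he⟩
        have := hs1 j s hs he
        simp only [if_pos ho, if_pos he]
        omega
      · have := hs2 j s hs he
        simp only [if_neg he]
        split_ifs <;> omega
    · rcases h1 with hn | ⟨ho, idx, hidx, hidxa, hlt⟩
      · simp only [if_neg hn, if_true]; omega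
      · simp only [if_pos ho, if_true]
        rw [hend i q ho ?_ hqle]
        · omega
        · intro k hk hkm hka
          exact hqne (by omega) (hconv i idx q k (by omega) hk hkm hidxa hka)
  · obtain ⟨c, w, c', w', hcw, hcw', hww, hc, hc'⟩ : ∃ c w c' w',
        (c = 1 ∧ w = b ∨ c = b ∧ w = 1) ∧ (c' = 1 ∧ w' = b ∨ c' = b ∧ w' = 1) ∧ b < w + w' ∧
        ConsistentIn ms evs c a ∧ ConsistentIn ms evs c' x := by
      by_cases h : ConsistentIn ms evs b a
      · exact ⟨b, 1, 1, b, Or.inr ⟨rfl, rfl⟩, Or.inl ⟨rfl, rfl⟩, by omega, h, hxc h⟩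
      · have h' := (hcons a).resolve_right h
        rcases hcons x with hx | hx
        · exact ⟨1, b, 1, b, Or.inl ⟨rfl, rfl⟩, Or.inl ⟨rfl, rfl⟩, by omega, h', hx⟩
        · exact ⟨1, b, b, 1, Or.inl ⟨rfl, rfl⟩, Or.inr ⟨rfl, rfl⟩, by omega, h', hx⟩
    obtain ⟨B, hB, hmono, hs1, hs2, hno, hend, hstart, hconv⟩ :=
      thin_progress b ms evs a ha c w hcw hc
    obtain ⟨X, hX, hmonoX, hs1X, hs2X, hnoX, hendX, hstartX, hconvX⟩ :=
      thin_progress b ms evs x hxt c' w' hcw' hc'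
    have hw : 1 ≤ w ∧ w ≤ b := by omega
    have hw' : 1 ≤ w' ∧ w' ≤ b := by omega
    have hboth : ∀ j s, s ≤ ms j → OccursIn (ms j) (evs j) a → OccursIn (ms j) (evs j) x →
        B j s = 0 ∨ X j s = b := by
      intro j s hs ho hox
      by_cases hex : ∃ k, k < s ∧ k < ms j ∧ evs j k = a
      · obtain ⟨k, hks, hkm, hka⟩ := hex
        right
        refine hendX j s hox ?_ hs
        intro r hr hrm hrx
        exact hord j ho hox ⟨k, r, hkm, hrm, hka, hrx, by omega⟩
      · left
        push Not at hex
        exact hstart j s hex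
    have hoX : OccursIn (ms i) (evs i) x := ⟨z - 1, by omega, hzx⟩
    refine region_of b τ hτ ms evs
      (fun j s => if OccursIn (ms j) (evs j) a then
          (if OccursIn (ms j) (evs j) x then X j s - B j s else b - B j s) else X j s)
      (fun e => if e = a then w else 0) (fun e => if e = x then w' else 0) ?_ ?_ ?_ ?_ ?_ a i q ?_
    · intro j s _
      have := hX j s
      split_ifs <;> omega
    · intro e; split_ifs <;> omega
    · intro e; split_ifs <;> omega
    · intro e
      by_cases he : e = a
      · right; exact if_neg (fun h => hxa (h.symm.trans he))
      · left; exact if_neg he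
    · intro j s hs
      have hb0 := hB j s
      have hb1 := hB j (s + 1)
      have hx0 := hX j s
      have hx1 := hX j (s + 1)
      have hbo := hboth j s hs.le
      have hbo1 := hboth j (s + 1) hs
      by_cases he : evs j s = a
      · have ho : OccursIn (ms j) (evs j) a := ⟨s, hs, he⟩
        have hex : ¬ evs j s = x := fun h => hxa (h.symm.trans he)
        have := hs1 j s hs he
        have := hs2X j s hs hex
        simp only [if_pos ho, if_pos he, if_neg hex]
        split_ifs with hox
        · have := hbo1 ho hox
          omega
        · omega
      · have := hs2 j s hs he
        simp only [if_neg he]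
        by_cases hex : evs j s = x
        · have hox : OccursIn (ms j) (evs j) x := ⟨s, hs, hex⟩
          have := hs1X j s hs hex
          simp only [if_pos hox, if_pos hex]
          split_ifs with ho
          · have := hbo ho hox
            omega
          · omega
        · have := hs2X j s hs hex
          simp only [if_neg hex]
          split_ifs <;> omega
    · simp only [if_pos hoa, if_pos hoX, if_true]
      have hqlt : (q : ℕ) < ms i := by omega
      have hqz : (q : ℕ) < z := by
        by_contra hcon
        exact hqne hqlt (hconv i z q idx (by omega) hqidx hidx hza hidxa)
      have h1 := hmonoX i q (z - 1) (by omega)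
      have h2 := hs1X i (z - 1) (by omega) hzx
      have h3 := hX i (z - 1 + 1)
      omega


end PNS
end

section
/- Let b ∈ ℕ⁺ and let φ be an instance of cubic monotone one-in-three 3-SAT. If the union U_{τ_PPT^b}(φ) has the τ_PPT^b-ESSP, then φ has a one-in-three model. -/
namespace PNS

/-- An instance of cubic monotone one-in-three 3-SAT with `m` clauses over the
`m` variables `Fin m`: the `i`-th clause is `{cl i 0, cl i 1, cl i 2}` with
`cl i 0 < cl i 1 < cl i 2`, and every variable occurs in exactly three clauses. -/
structure CMSat (m : ℕ) : Type where
  cl : Fin m → Fin 3 → Fin m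
  mono01 : ∀ i, cl i 0 < cl i 1
  mono12 : ∀ i, cl i 1 < cl i 2
  cubic : ∀ v : Fin m,
    (Finset.univ.filter (fun i => v = cl i 0 ∨ v = cl i 1 ∨ v = cl i 2)).card = 3

/-- `M` is a one-in-three model of `φ`: every clause contains exactly one variable of `M`. -/
def OneInThreeModel {m : ℕ} (φ : CMSat m) (M : Set (Fin m)) : Prop :=
  ∀ i : Fin m, ∃! j : Fin 3, φ.cl i j ∈ M

/-- Index set of the gadgets of the union `U_{τ_PPT^b}(φ)`. -/
inductive PPTIdx (m : ℕ) : Type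
  | H : PPTIdx m
  | D : Fin 4 → PPTIdx m
  | F : Fin (2 * m) → PPTIdx m
  | G : Fin (2 * m) → PPTIdx m
  | M : Fin m → PPTIdx m
  | T : Fin m → PPTIdx m

/-- Events of the union `U_{τ_PPT^b}(φ)`. -/
inductive PPTEv (m : ℕ) : Type
  | k : PPTEv m
  | y0 : PPTEv m
  | y1 : PPTEv m
  | o0 : PPTEv m
  | o1 : PPTEv m
  | kk : Fin 4 → PPTEv m
  | z : Fin (2 * m) → PPTEv m
  | X : Fin m → PPTEv m
  deriving DecidableEq

/-- The label sequences of the linear gadgets of `U_{τ_PPT^b}(φ)`. -/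
def gadPPT (b : ℕ) {m : ℕ} (φ : CMSat m) : PPTIdx m → List (PPTEv m)
  | .H => List.replicate b .k ++ [.y0, .o0] ++ List.replicate b .k ++
      [.y1, .y0, .o1] ++ List.replicate b .k
  | .D j => [.o0, .kk j, .o1]
  | .F j => [.kk 0, .z j]
  | .G j => [.z j, .o0]
  | .M i => .kk 1 :: List.replicate b (.X i)
  | .T i => .kk 2 :: (List.replicate b (.X (φ.cl i 0)) ++
      .z ⟨2 * (i : ℕ), by have := i.isLt; omega⟩ :: (List.replicate b (.X (φ.cl i 1)) ++
      .z ⟨2 * (i : ℕ) + 1, by have := i.isLt; omega⟩ ::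
        (List.replicate b (.X (φ.cl i 2)) ++ [.kk 3])))

/-- The union `U_{τ_PPT^b}(φ)` of linear gadget TS. -/
noncomputable def UPPT (b : ℕ) {m : ℕ} (φ : CMSat m) :
    ∀ i : PPTIdx m, TS (Fin ((gadPPT b φ i).length + 1)) (PPTEv m) :=
  fun i => linOfList (gadPPT b φ i) PPTEv.k

/-- Integer effect of a pair event. -/
def effect (e : BEvent) : ℤ := (sigPlus e : ℤ) - (sigMinus e : ℤ)

theorem ppt_some {b s t : ℕ} {e : BEvent}
    (h : (tauPPT b).delta s e = some t) : (t : ℤ) = s + effect e := by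
  cases e with
  | num z => simp [tauPPT, deltaPT] at h
  | pair p q =>
    simp only [tauPPT, deltaPT] at h
    split_ifs at h with hc
    simp only [Option.some.injEq] at h
    simp only [effect, sigPlus, sigMinus]
    omega

theorem ppt_none {b s : ℕ} {e : BEvent} (hs : s ≤ b) (he : e ∈ (tauPPT b).events)
    (h : (tauPPT b).delta s e = none) :
    (s : ℤ) + effect e < 0 ∨ (b : ℤ) < s + effect e := by
  obtain ⟨p, q, rfl, hp, hq, hpq⟩ := he
  simp only [tauPPT, deltaPT] at h
  split_ifs at h with hc
  simp only [effect, sigPlus, sigMinus]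
  omega

theorem lin_edge {E : Type} (l l1 l2 : List E) (e d : E) (hl : l = l1 ++ e :: l2)
    (h1 : l1.length < l.length + 1) (h2 : l1.length + 1 < l.length + 1) :
    (linOfList l d).delta ⟨l1.length, h1⟩ e = some ⟨l1.length + 1, h2⟩ := by
  have h3 : l1.length < l.length := by omega
  have h4 : l.getD l1.length d = e := by subst hl; simp
  simp only [linOfList, linTS]
  rw [dif_pos ⟨h3, h4⟩]

theorem lin_none {E : Type} (l l1 l2 : List E) (e e' d : E) (hl : l = l1 ++ e :: l2)
    (hne : e ≠ e') (h1 : l1.length < l.length + 1) :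
    (linOfList l d).delta ⟨l1.length, h1⟩ e' = none := by
  have h4 : l.getD l1.length d = e := by subst hl; simp
  simp only [linOfList, linTS]
  rw [dif_neg]
  rintro ⟨_, h5⟩
  exact hne (h4.symm.trans h5)

theorem sup_eq {b m : ℕ} (φ : CMSat m)
    {sup : (Σ i : PPTIdx m, Fin ((gadPPT b φ i).length + 1)) → ℕ} {sig : PPTEv m → BEvent}
    (hr : UnionRegion (tauPPT b) (UPPT b φ) sup sig) (i : PPTIdx m) (l1 : List (PPTEv m)) :
    ∀ l2, gadPPT b φ i = l1 ++ l2 → ∀ h1 : l1.length < (gadPPT b φ i).length + 1,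
      (sup ⟨i, ⟨l1.length, h1⟩⟩ : ℤ) =
        sup ⟨i, 0⟩ + (l1.map (fun e => effect (sig e))).sum := by
  induction l1 using List.reverseRecOn with
  | nil => intro l2 _ h1; simp
  | append_singleton l e ih =>
    intro l2 hl h1
    have hl' : gadPPT b φ i = l ++ e :: l2 := by simpa using hl
    have hlen : (l ++ [e]).length = l.length + 1 := by simp
    have ha : l.length < (gadPPT b φ i).length + 1 := by omega
    have hb' : l.length + 1 < (gadPPT b φ i).length + 1 := by omega
    have h3 := ppt_some (hr.2.2 i ⟨l.length, ha⟩ e ⟨l.length + 1, hb'⟩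
      (lin_edge _ l l2 e _ hl' ha hb'))
    have h4 := ih _ hl' ha
    have h5 : (⟨(l ++ [e]).length, h1⟩ : Fin ((gadPPT b φ i).length + 1))
        = ⟨l.length + 1, hb'⟩ := Fin.ext hlen
    rw [h5, h3, h4]
    simp
    ring

/-- The prefix of `H` leading to the state at which `k` is to be inhibited. -/
def preH (b m : ℕ) : List (PPTEv m) :=
  List.replicate b .k ++ [.y0, .o0] ++ List.replicate b .k ++ [.y1, .y0]

theorem core {b m : ℕ} (hb : 1 ≤ b) (φ : CMSat m) (S : PPTIdx m → ℤ) (v : PPTEv m → ℤ)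
    (hS : ∀ i l1 l2, gadPPT b φ i = l1 ++ l2 →
      0 ≤ S i + (l1.map v).sum ∧ S i + (l1.map v).sum ≤ b)
    (hk : v .k = 1) (hH : (b : ℤ) ≤ S .H + ((preH b m).map v).sum) :
    ∃ M : Set (Fin m), OneInThreeModel φ M := by
  have hb0 : (1 : ℤ) ≤ b := by exact_mod_cast hb
  -- gadget H
  have a0 := hS .H [] _ rfl
  have a1 := hS .H (List.replicate b .k) ([.y0, .o0] ++ List.replicate b .k ++
      [.y1, .y0, .o1] ++ List.replicate b .k) (by simp [gadPPT])
  have a2 := hS .H (List.replicate b .k ++ [.y0]) ([.o0] ++ List.replicate b .k ++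
      [.y1, .y0, .o1] ++ List.replicate b .k) (by simp [gadPPT])
  have a3 := hS .H (List.replicate b .k ++ [.y0, .o0]) (List.replicate b .k ++
      [.y1, .y0, .o1] ++ List.replicate b .k) (by simp [gadPPT])
  have a4 := hS .H (List.replicate b .k ++ [.y0, .o0] ++ List.replicate b .k)
      ([.y1, .y0, .o1] ++ List.replicate b .k) (by simp [gadPPT])
  have a5 := hS .H (List.replicate b .k ++ [.y0, .o0] ++ List.replicate b .k ++ [.y1])
      ([.y0, .o1] ++ List.replicate b .k) (by simp [gadPPT])
  have a6 := hS .H (List.replicate b .k ++ [.y0, .o0] ++ List.replicate b .k ++ [.y1, .y0])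
      ([.o1] ++ List.replicate b .k) (by simp [gadPPT])
  have a7 := hS .H (List.replicate b .k ++ [.y0, .o0] ++ List.replicate b .k ++
      [.y1, .y0, .o1]) (List.replicate b .k) (by simp [gadPPT])
  have a8 := hS .H _ [] (by rw [List.append_nil])
  simp [gadPPT, preH, hk] at a0 a1 a2 a3 a4 a5 a6 a7 a8 hH
  have ho0 : v .o0 = -b := by omega
  have ho1 : v .o1 = -b := by omega
  clear a0 a1 a2 a3 a4 a5 a6 a7 a8 hH
  -- gadgets D
  have hkk : ∀ j, v (.kk j) = b := by
    intro j
    have a0 := hS (.D j) [] _ rfl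
    have a1 := hS (.D j) [.o0] _ rfl
    have a2 := hS (.D j) [.o0, .kk j] _ rfl
    have a3 := hS (.D j) [.o0, .kk j, .o1] [] rfl
    simp [ho0, ho1] at a0 a1 a2 a3
    omega
  -- gadgets F, G
  have hz : ∀ j, v (.z j) = 0 := by
    intro j
    have a0 := hS (.F j) [] _ rfl
    have a1 := hS (.F j) [.kk 0] _ rfl
    have a2 := hS (.F j) [.kk 0, .z j] [] rfl
    have c0 := hS (.G j) [] _ rfl
    have c1 := hS (.G j) [.z j] _ rfl
    have c2 := hS (.G j) [.z j, .o0] [] rfl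
    simp [ho0, hkk] at a0 a1 a2 c0 c1 c2
    omega
  -- gadgets M
  have hX : ∀ i, v (.X i) = 0 ∨ v (.X i) = -1 := by
    intro i
    have a0 := hS (.M i) [] _ rfl
    have a1 := hS (.M i) [.kk 1] _ rfl
    have a2 := hS (.M i) _ [] (by rw [List.append_nil])
    simp [gadPPT, hkk] at a0 a1 a2
    have e1 : v (.X i) ≤ 0 := by nlinarith
    have e2 : -1 ≤ v (.X i) := by nlinarith
    omega
  refine ⟨{x | v (.X x) = -1}, fun i => ?_⟩
  -- gadgets T
  have a0 := hS (.T i) [] _ rfl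
  have a1 := hS (.T i) [.kk 2] _ rfl
  have a2 := hS (.T i) (.kk 2 :: (List.replicate b (.X (φ.cl i 0)) ++
      .z ⟨2 * (i : ℕ), by have := i.isLt; omega⟩ :: (List.replicate b (.X (φ.cl i 1)) ++
      .z ⟨2 * (i : ℕ) + 1, by have := i.isLt; omega⟩ ::
        (List.replicate b (.X (φ.cl i 2)))))) [.kk 3] (by simp [gadPPT])
  have a3 := hS (.T i) _ [] (by rw [List.append_nil])
  simp [gadPPT, hkk, hz] at a0 a1 a2 a3
  have e : v (.X (φ.cl i 0)) + v (.X (φ.cl i 1)) + v (.X (φ.cl i 2)) = -1 := by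
    have : (b : ℤ) * (v (.X (φ.cl i 0)) + v (.X (φ.cl i 1)) + v (.X (φ.cl i 2)) + 1) = 0 := by
      linarith
    rcases mul_eq_zero.mp this with h | h <;> omega
  have h0 := hX (φ.cl i 0)
  have h1 := hX (φ.cl i 1)
  have h2 := hX (φ.cl i 2)
  have hcase : (v (.X (φ.cl i 0)) = -1 ∧ v (.X (φ.cl i 1)) = 0 ∧ v (.X (φ.cl i 2)) = 0) ∨
      (v (.X (φ.cl i 0)) = 0 ∧ v (.X (φ.cl i 1)) = -1 ∧ v (.X (φ.cl i 2)) = 0) ∨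
      (v (.X (φ.cl i 0)) = 0 ∧ v (.X (φ.cl i 1)) = 0 ∧ v (.X (φ.cl i 2)) = -1) := by omega
  rcases hcase with ⟨p, q, r⟩ | ⟨p, q, r⟩ | ⟨p, q, r⟩
  · refine ⟨0, p, fun j hj => ?_⟩
    fin_cases j <;> simp_all
  · refine ⟨1, q, fun j hj => ?_⟩
    fin_cases j <;> simp_all
  · refine ⟨2, r, fun j hj => ?_⟩
    fin_cases j <;> simp_all

/-- If the union `U_{τ_PPT^b}(φ)` has the `τ_PPT^b`-ESSP, then the
cubic monotone one-in-three 3-SAT instance `φ` has a one-in-three model. -/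
theorem stmt6 (b : ℕ) (hb : 1 ≤ b) {m : ℕ} (φ : CMSat m)
    (h : UnionHasESSP (tauPPT b) (UPPT b φ)) :
    ∃ M : Set (Fin m), OneInThreeModel φ M := by
  have hpre : gadPPT b φ .H = preH b m ++ .o1 :: List.replicate b .k := by
    simp [gadPPT, preH]
  have hlt : (preH b m).length < (gadPPT b φ .H).length + 1 := by
    rw [hpre]; simp
  obtain ⟨sup, sig, hr, hn⟩ := h .k .H ⟨(preH b m).length, hlt⟩
    (lin_none _ _ _ _ _ _ hpre (by simp) hlt)
  set v : PPTEv m → ℤ := fun e => effect (sig e) with hv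
  have hS : ∀ i l1 l2, gadPPT b φ i = l1 ++ l2 →
      0 ≤ (sup ⟨i, 0⟩ : ℤ) + (l1.map v).sum ∧ (sup ⟨i, 0⟩ : ℤ) + (l1.map v).sum ≤ b := by
    intro i l1 l2 hl
    have h1 : l1.length < (gadPPT b φ i).length + 1 := by rw [hl]; simp
    rw [← sup_eq φ hr i l1 l2 hl h1]
    exact ⟨Int.natCast_nonneg _, by exact_mod_cast hr.1 _⟩
  have hno := ppt_none (hr.1 _) (hr.2.1 _) hn
  rw [sup_eq φ hr .H _ _ hpre hlt] at hno
  have hpb := hS .H _ _ hpre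
  have a0 := hS .H [] _ rfl
  have a1 := hS .H (List.replicate b .k) ([.y0, .o0] ++ List.replicate b .k ++
      [.y1, .y0, .o1] ++ List.replicate b .k) (by simp [gadPPT])
  have hb0 : (1 : ℤ) ≤ b := by exact_mod_cast hb
  change _ + (List.map v (preH b m)).sum + v .k < 0 ∨
    _ < _ + (List.map v (preH b m)).sum + v .k at hno
  simp only [List.map_nil, List.sum_nil, List.map_replicate, List.sum_replicate,
    nsmul_eq_mul, add_zero] at a0 a1
  have hk1 : v .k ≤ 1 := by nlinarith
  have hk2 : -1 ≤ v .k := by nlinarith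
  have hk : v .k = 1 ∨ v .k = -1 := by omega
  rcases hk with hk | hk
  · exact core hb φ (fun i => (sup ⟨i, 0⟩ : ℤ)) v hS hk (by show (b : ℤ) ≤ sup _ + _; omega)
  · have hneg : ∀ l : List (PPTEv m), (l.map (fun e => - v e)).sum = - (l.map v).sum := by
      intro l
      induction l with
      | nil => simp
      | cons a t ih => simp only [List.map_cons, List.sum_cons, ih]; ring
    refine core hb φ (fun i => (b : ℤ) - (sup ⟨i, 0⟩ : ℤ)) (fun e => - v e) ?_ ?_ ?_
    · intro i l1 l2 hl
      have := hS i l1 l2 hl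
      rw [hneg]
      constructor <;> linarith
    · simp only [hk]; norm_num
    · rw [hneg]
      show (b : ℤ) ≤ b - sup _ + _
      omega

end PNS
end

section
/- Let b ∈ ℕ⁺ and let φ be an instance of cubic monotone one-in-three 3-SAT. If φ has a one-in-three model, then the union U_{τ_PPT^b}(φ) has the τ_PPT^b-ESSP and the τ_PPT^b-SSP. -/
namespace PNS

def psum {E : Type} (w : E → ℤ) (l : List E) (p : ℕ) : ℤ := ((l.take p).map w).sum

theorem psum_nil {E : Type} (w : E → ℤ) (p : ℕ) : psum w [] p = 0 := by simp [psum]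

theorem psum_cons {E : Type} (w : E → ℤ) (a : E) (l : List E) (p : ℕ) :
    psum w (a :: l) p = if p = 0 then 0 else w a + psum w l (p - 1) := by
  cases p <;> simp [psum]

theorem psum_append {E : Type} (w : E → ℤ) (l l' : List E) (p : ℕ) :
    psum w (l ++ l') p = psum w l p + psum w l' (p - l.length) := by
  simp [psum, List.take_append]

theorem psum_replicate {E : Type} (w : E → ℤ) (a : E) (n p : ℕ) :
    psum w (List.replicate n a) p = ((min p n : ℕ) : ℤ) * w a := by
  simp [psum, List.take_replicate]

theorem psum_succ {E : Type} (w : E → ℤ) (d : E) (l : List E) (p : ℕ) (h : p < l.length) :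
    psum w l (p + 1) = psum w l p + w (l.getD p d) := by
  unfold psum
  rw [List.take_add_one, List.map_append, List.sum_append, List.getD_eq_getElem _ _ h,
    List.getElem?_eq_getElem h]
  simp

def mkSig (z : ℤ) : BEvent := .pair (-z).toNat z.toNat

theorem delta_some (b : ℕ) (s t : ℤ) (h0 : 0 ≤ s) (h1 : 0 ≤ s + t) (h2 : s + t ≤ b) :
    deltaPT b s.toNat (mkSig t) = some (s + t).toNat := by
  have : (-t).toNat ≤ s.toNat ∧ s.toNat - (-t).toNat + t.toNat ≤ b := by omega
  simp only [deltaPT, mkSig, this, and_self, if_true]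
  congr 1; omega

theorem delta_none (b : ℕ) (s t : ℤ) (h0 : 0 ≤ s) (h : (b : ℤ) < s + t) :
    deltaPT b s.toNat (mkSig t) = none := by
  have : ¬ ((-t).toNat ≤ s.toNat ∧ s.toNat - (-t).toNat + t.toNat ≤ b) := by omega
  simp only [deltaPT, mkSig, this, if_false]

/-- all partial sums of `l` lie in `[u - b, u]` -/
def Fits {E : Type} (b : ℕ) (w : E → ℤ) (l : List E) (u : ℤ) : Prop :=
  ∀ p, u - b ≤ psum w l p ∧ psum w l p ≤ u

def Feas (b : ℕ) {m : ℕ} (φ : CMSat m) (w : PPTEv m → ℤ) : Prop :=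
  (∀ e, -(b : ℤ) ≤ w e ∧ w e ≤ b) ∧ ∀ i, ∃ u, Fits b w (gadPPT b φ i) u

theorem UPPT_some {b m : ℕ} {φ : CMSat m} {i} {s s' : Fin ((gadPPT b φ i).length + 1)} {e}
    (h : (UPPT b φ i).delta s e = some s') :
    (s : ℕ) < (gadPPT b φ i).length ∧ (gadPPT b φ i).getD s .k = e ∧ (s' : ℕ) = s + 1 := by
  simp only [UPPT, linOfList, linTS] at h
  split_ifs at h with h1
  refine ⟨h1.1, h1.2, ?_⟩
  simp only [Option.some.injEq] at h
  rw [← h]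

theorem UPPT_none {b m : ℕ} {φ : CMSat m} {i} {s : Fin ((gadPPT b φ i).length + 1)} {e}
    (h : (UPPT b φ i).delta s e = none) :
    ¬ ((s : ℕ) < (gadPPT b φ i).length ∧ (gadPPT b φ i).getD s .k = e) := by
  simp only [UPPT, linOfList, linTS] at h
  split_ifs at h with h1
  exact h1

theorem region {b m : ℕ} {φ : CMSat m} {w : PPTEv m → ℤ} (hw : ∀ e, -(b : ℤ) ≤ w e ∧ w e ≤ b)
    (u : PPTIdx m → ℤ) (hu : ∀ i, Fits b w (gadPPT b φ i) (u i)) :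
    UnionRegion (tauPPT b) (UPPT b φ)
      (fun x => (b - u x.1 + psum w (gadPPT b φ x.1) x.2).toNat) (fun e => mkSig (w e)) := by
  refine ⟨?_, ?_, ?_⟩
  · rintro ⟨i, s⟩
    have := hu i s
    simp only [tauPPT, Set.mem_ofPred_eq]
    omega
  · intro e
    have := hw e
    exact ⟨_, _, rfl, by omega, by omega, by omega⟩
  · intro i s e s' h
    obtain ⟨h1, h2, h3⟩ := UPPT_some h
    have h4 := psum_succ w .k _ _ h1
    have h5 := hu i s
    have h6 := hu i (s + 1)
    rw [h2] at h4
    simp only [h3, h4, tauPPT]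
    rw [h4] at h6
    rw [← add_assoc]
    exact delta_some _ _ _ (by omega) (by omega) (by omega)

open Classical in
theorem essa {b m : ℕ} {φ : CMSat m} {w : PPTEv m → ℤ} (hw : Feas b φ w)
    (i : PPTIdx m) (s : Fin ((gadPPT b φ i).length + 1)) (e : PPTEv m) (u : ℤ)
    (hu : Fits b w (gadPPT b φ i) u) (h : u < psum w (gadPPT b φ i) s + w e) :
    ∃ sup sig, UnionRegion (tauPPT b) (UPPT b φ) sup sig ∧
      (tauPPT b).delta (sup ⟨i, s⟩) (sig e) = none := by
  obtain ⟨hw1, hw2⟩ := hw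
  choose v hv using hw2
  refine ⟨_, _, region hw1 (Function.update v i u) ?_, ?_⟩
  · intro j
    by_cases hj : j = i
    · subst hj; simpa using hu
    · simpa [hj] using hv j
  · have := hu s
    simp only [Function.update_self, tauPPT]
    exact delta_none _ _ _ (by omega) (by omega)

theorem ssa {b m : ℕ} {φ : CMSat m} {w : PPTEv m → ℤ} (hw : Feas b φ w)
    (i : PPTIdx m) (s s' : Fin ((gadPPT b φ i).length + 1))
    (h : psum w (gadPPT b φ i) s ≠ psum w (gadPPT b φ i) s') :
    ∃ sup sig, UnionRegion (tauPPT b) (UPPT b φ) sup sig ∧ sup ⟨i, s⟩ ≠ sup ⟨i, s'⟩ := by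
  obtain ⟨hw1, hw2⟩ := hw
  choose v hv using hw2
  refine ⟨_, _, region hw1 v hv, ?_⟩
  have h1 := hv i s
  have h2 := hv i s'
  simp only
  omega

/-! ### one- and two-event regions -/

def cw (b : ℕ) {m : ℕ} : PPTEv m → ℤ
  | .X _ => 1
  | _ => b

def wA (b : ℕ) {m : ℕ} (e : PPTEv m) : PPTEv m → ℤ := fun a => if a = e then cw b e else 0

def wB (b : ℕ) {m : ℕ} (e f : PPTEv m) : PPTEv m → ℤ :=
  fun a => if a = e then cw b e else if a = f then - cw b f else 0

theorem cw_bd {b : ℕ} (hb : 1 ≤ b) {m : ℕ} (e : PPTEv m) : 1 ≤ cw b e ∧ cw b e ≤ b := by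
  cases e <;> simp [cw] <;> omega

theorem psum_wA (b : ℕ) {m : ℕ} (e : PPTEv m) (l : List (PPTEv m)) (p : ℕ) :
    psum (wA b e) l p = cw b e * ((l.take p).count e : ℕ) := by
  unfold psum
  generalize l.take p = t
  induction t with
  | nil => simp
  | cons a t ih =>
    simp only [List.map_cons, List.sum_cons, ih, List.count_cons, wA, beq_iff_eq]
    split_ifs <;> push_cast <;> ring

theorem psum_wB (b : ℕ) {m : ℕ} (e f : PPTEv m) (hef : e ≠ f) (l : List (PPTEv m)) (p : ℕ) :
    psum (wB b e f) l p =
      cw b e * ((l.take p).count e : ℕ) - cw b f * ((l.take p).count f : ℕ) := by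
  unfold psum
  generalize l.take p = t
  induction t with
  | nil => simp
  | cons a t ih =>
    simp only [List.map_cons, List.sum_cons, ih, List.count_cons, wB, beq_iff_eq]
    split_ifs <;> push_cast <;> first | ring1 | (exfalso; simp_all)

def Simple {m : ℕ} (e : PPTEv m) : Prop := e ≠ .k ∧ e ≠ .y0

def expand {E : Type} : List (E × ℕ) → List E
  | [] => []
  | x :: bs => List.replicate x.2 x.1 ++ expand bs

theorem mem_expand {E : Type} (bs : List (E × ℕ)) (f : E) (h : f ∈ expand bs) :
    f ∈ bs.map Prod.fst := by
  induction bs with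
  | nil => simp [expand] at h
  | cons x bs ih =>
    simp only [expand, List.mem_append, List.mem_replicate] at h
    rcases h with h | h
    · simp [h.2]
    · exact List.mem_cons_of_mem _ (ih h)

theorem expand_count {b m : ℕ} (bs : List (PPTEv m × ℕ)) (hn : (bs.map Prod.fst).Nodup)
    (hc : ∀ x ∈ bs, cw b x.1 * (x.2 : ℕ) = b) (f : PPTEv m) (hf : f ∈ expand bs) :
    cw b f * ((expand bs).count f : ℕ) = b := by
  induction bs with
  | nil => simp [expand] at hf
  | cons x bs ih =>
    simp only [List.map_cons, List.nodup_cons] at hn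
    by_cases h : x.1 = f
    · have h2 : f ∉ expand bs := fun h3 => hn.1 (h ▸ mem_expand _ _ h3)
      have := hc x (by simp)
      simp only [expand, List.count_append, List.count_replicate, List.count_eq_zero_of_not_mem h2, h]
      simpa [h] using this
    · have h2 : f ∈ expand bs := by
        simp only [expand, List.mem_append, List.mem_replicate] at hf
        rcases hf with hf | hf
        · exact absurd hf.2.symm h
        · exact hf
      have := ih hn.2 (fun x hx => hc x (List.mem_cons_of_mem _ hx)) h2
      simp only [expand, List.count_append, List.count_replicate]
      simpa [h] using this

/-- no occurrence of `e` before an occurrence of `f` -/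
def NoBefore {E : Type} (e f : E) (l : List E) : Prop := l.Pairwise (fun x y => ¬ (x = e ∧ y = f))

theorem expand_order {m : ℕ} (bs : List (PPTEv m × ℕ)) (hn : (bs.map Prod.fst).Nodup)
    (e f : PPTEv m) (hef : e ≠ f) : NoBefore e f (expand bs) ∨ NoBefore f e (expand bs) := by
  induction bs with
  | nil => left; simp [NoBefore, expand]
  | cons x bs ih =>
    simp only [List.map_cons, List.nodup_cons] at hn
    have key : ∀ e f : PPTEv m, e ≠ f → NoBefore e f (expand bs) →
        (x.1 ≠ e ∨ f ∉ expand bs) → NoBefore e f (expand (x :: bs)) := by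
      intro e f hef h1 h2
      simp only [NoBefore, expand, List.pairwise_append, List.pairwise_replicate]
      refine ⟨Or.inr (by rintro ⟨h3, h4⟩; exact hef (h3.symm.trans h4)), h1, ?_⟩
      intro a ha c hc ⟨h3, h4⟩
      simp only [List.mem_replicate] at ha
      rcases h2 with h2 | h2
      · exact h2 (ha.2.symm.trans h3)
      · exact h2 (h4 ▸ hc)
    have key2 : ∀ e f : PPTEv m, f ∉ expand bs → NoBefore e f (expand bs) := by
      intro e f h
      rw [NoBefore, List.pairwise_iff_forall_sublist]
      rintro a c hac ⟨_, h4⟩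
      exact h (h4 ▸ hac.subset (by simp))
    by_cases h : x.1 = e
    · right
      have h2 : e ∉ expand bs := fun h3 => hn.1 (h ▸ mem_expand _ _ h3)
      exact key _ _ hef.symm (key2 _ _ h2) (Or.inr h2)
    · by_cases h' : x.1 = f
      · left
        have h2 : f ∉ expand bs := fun h3 => hn.1 (h' ▸ mem_expand _ _ h3)
        exact key _ _ hef (key2 _ _ h2) (Or.inr h2)
      · rcases ih hn.2 with h1 | h1
        · left; exact key _ _ hef h1 (Or.inl h)
        · right; exact key _ _ hef.symm h1 (Or.inl h')

def blocks (b : ℕ) {m : ℕ} (φ : CMSat m) : PPTIdx m → List (PPTEv m × ℕ)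
  | .H => []
  | .D j => [(.o0, 1), (.kk j, 1), (.o1, 1)]
  | .F j => [(.kk 0, 1), (.z j, 1)]
  | .G j => [(.z j, 1), (.o0, 1)]
  | .M i => [(.kk 1, 1), (.X i, b)]
  | .T i => [(.kk 2, 1), (.X (φ.cl i 0), b), (.z ⟨2 * (i : ℕ), by have := i.isLt; omega⟩, 1),
      (.X (φ.cl i 1), b), (.z ⟨2 * (i : ℕ) + 1, by have := i.isLt; omega⟩, 1),
      (.X (φ.cl i 2), b), (.kk 3, 1)]

theorem blocks_expand (b : ℕ) {m : ℕ} (φ : CMSat m) (i : PPTIdx m) (hi : i ≠ .H) :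
    gadPPT b φ i = expand (blocks b φ i) := by
  cases i <;> simp [gadPPT, blocks, expand] at *

theorem blocks_nodup (b : ℕ) {m : ℕ} (φ : CMSat m) (i : PPTIdx m) :
    ((blocks b φ i).map Prod.fst).Nodup := by
  cases i with
  | T i =>
    have h0 := (φ.mono01 i).ne
    have h1 := (φ.mono12 i).ne
    have h2 := ((φ.mono01 i).trans (φ.mono12 i)).ne
    simp [blocks, h0, h1, h2]
  | _ => simp [blocks]

theorem blocks_cw (b : ℕ) {m : ℕ} (φ : CMSat m) (i : PPTIdx m) :
    ∀ x ∈ blocks b φ i, cw b x.1 * (x.2 : ℕ) = b := by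
  cases i <;> simp [blocks, cw]

theorem blocks_simple (b : ℕ) {m : ℕ} (φ : CMSat m) (i : PPTIdx m) :
    ∀ x ∈ (blocks b φ i).map Prod.fst, Simple x := by
  cases i <;> simp [blocks, Simple]

theorem gad_count {b m : ℕ} (φ : CMSat m) (i : PPTIdx m) (f : PPTEv m) (hs : Simple f)
    (hf : f ∈ gadPPT b φ i) : cw b f * ((gadPPT b φ i).count f : ℕ) = b := by
  by_cases hi : i = .H
  · subst hi
    obtain ⟨h1, h2⟩ := hs
    simp only [gadPPT, List.mem_append, List.mem_replicate, List.mem_cons, List.not_mem_nil] at hf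
    simp only [gadPPT, List.count_append, List.count_replicate, List.count_cons, List.count_nil]
    have : f = .o0 ∨ f = .y1 ∨ f = .o1 := by tauto
    rcases this with rfl | rfl | rfl <;> simp [cw]
  · rw [blocks_expand b φ i hi] at hf ⊢
    exact expand_count _ (blocks_nodup b φ i) (blocks_cw b φ i) f hf

theorem gad_order {b m : ℕ} (φ : CMSat m) (i : PPTIdx m) (e f : PPTEv m) (hef : e ≠ f)
    (he : Simple e) (hf : Simple f) :
    NoBefore e f (gadPPT b φ i) ∨ NoBefore f e (gadPPT b φ i) := by
  by_cases hi : i = .H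
  · subst hi
    obtain ⟨h1, h2⟩ := he
    obtain ⟨h3, h4⟩ := hf
    simp only [NoBefore, gadPPT, List.pairwise_append, List.pairwise_replicate, List.mem_append,
      List.mem_replicate, List.mem_cons, List.not_mem_nil, List.pairwise_cons]
    by_cases a1 : e = .o0
    · subst a1; right; grind
    by_cases a2 : f = .o0
    · subst a2; left; grind
    by_cases a3 : e = .o1
    · subst a3; left; grind
    by_cases a4 : f = .o1
    · subst a4; right; grind
    left; grind
  · rw [blocks_expand b φ i hi]
    exact expand_order _ (blocks_nodup b φ i) e f hef

theorem noBefore_take {E : Type} [DecidableEq E] {e f : E} {l : List E} (h : NoBefore e f l)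
    (p : ℕ) : (l.take p).count e = 0 ∨ (l.take p).count f = l.count f := by
  have h2 := h
  rw [NoBefore, ← List.take_append_drop p l, List.pairwise_append] at h2
  by_cases he : e ∈ l.take p
  · right
    have : f ∉ l.drop p := fun hf => h2.2.2 e he f hf ⟨rfl, rfl⟩
    conv_rhs => rw [← List.take_append_drop p l, List.count_append,
      List.count_eq_zero_of_not_mem this]
    simp
  · left; exact List.count_eq_zero_of_not_mem he

theorem count_bd {b : ℕ} (hb : 1 ≤ b) {m : ℕ} (φ : CMSat m) (i : PPTIdx m) (f : PPTEv m)
    (hs : Simple f) (p : ℕ) : 0 ≤ cw b f * (((gadPPT b φ i).take p).count f : ℕ) ∧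
      cw b f * (((gadPPT b φ i).take p).count f : ℕ) ≤ b := by
  have h1 := (cw_bd hb f).1
  refine ⟨by positivity, ?_⟩
  have h2 : ((gadPPT b φ i).take p).count f ≤ (gadPPT b φ i).count f :=
    (List.take_sublist _ _).count_le _
  by_cases hf : f ∈ gadPPT b φ i
  · rw [← gad_count φ i f hs hf]
    have : (((gadPPT b φ i).take p).count f : ℤ) ≤ (gadPPT b φ i).count f := by exact_mod_cast h2
    exact mul_le_mul_of_nonneg_left this (by omega)
  · rw [List.count_eq_zero_of_not_mem hf] at h2
    simp [Nat.le_zero.mp h2]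

theorem feas_wA {b : ℕ} (hb : 1 ≤ b) {m : ℕ} (φ : CMSat m) (e : PPTEv m) (he : Simple e) :
    (∀ i, Fits b (wA b e) (gadPPT b φ i) b) ∧ Feas b φ (wA b e) := by
  have : ∀ i, Fits b (wA b e) (gadPPT b φ i) b := by
    intro i p
    rw [psum_wA]
    have := count_bd hb φ i e he p
    omega
  refine ⟨this, ?_, fun i => ⟨_, this i⟩⟩
  intro a
  have := cw_bd hb e
  simp only [wA]; split_ifs <;> omega

theorem fits_wB {b : ℕ} (hb : 1 ≤ b) {m : ℕ} (φ : CMSat m) (e f : PPTEv m) (hef : e ≠ f)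
    (he : Simple e) (hf : Simple f) (i : PPTIdx m) (hi : f ∈ gadPPT b φ i)
    (h : NoBefore e f (gadPPT b φ i)) : Fits b (wB b e f) (gadPPT b φ i) 0 := by
  intro p
  rw [psum_wB _ _ _ hef]
  have h1 := count_bd hb φ i e he p
  have h2 := count_bd hb φ i f hf p
  have h3 := gad_count φ i f hf hi
  rcases noBefore_take h p with h4 | h4
  · rw [h4] at h1 ⊢
    simp only [Nat.cast_zero, mul_zero] at *
    omega
  · rw [h4, h3]; omega

theorem feas_wB {b : ℕ} (hb : 1 ≤ b) {m : ℕ} (φ : CMSat m) (e f : PPTEv m) (hef : e ≠ f)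
    (he : Simple e) (hf : Simple f) : Feas b φ (wB b e f) := by
  constructor
  · intro a
    have := cw_bd hb e
    have := cw_bd hb f
    simp only [wB]; split_ifs <;> omega
  · intro i
    by_cases hi' : e ∉ gadPPT b φ i
    · refine ⟨0, fun p => ?_⟩
      rw [psum_wB _ _ _ hef]
      have h1 := count_bd hb φ i f hf p
      have : ((gadPPT b φ i).take p).count e = 0 :=
        List.count_eq_zero_of_not_mem fun h => hi' (List.mem_of_mem_take h)
      rw [this]; simp only [Nat.cast_zero, mul_zero]; omega
    rw [not_not] at hi'
    by_cases hi : f ∈ gadPPT b φ i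
    · rcases gad_order (b := b) φ i e f hef he hf with h | h
      · exact ⟨_, fits_wB hb φ e f hef he hf i hi h⟩
      · refine ⟨b, fun p => ?_⟩
        rw [psum_wB _ _ _ hef]
        have h1 := count_bd hb φ i e he p
        have h2 := count_bd hb φ i f hf p
        rcases noBefore_take h p with h4 | h4
        · rw [h4]; simp only [Nat.cast_zero, mul_zero]; omega
        · have h3 := gad_count φ i e he hi'
          rw [h4, h3]; omega
    · refine ⟨b, fun p => ?_⟩
      rw [psum_wB _ _ _ hef]
      have h1 := count_bd hb φ i e he p
      have : ((gadPPT b φ i).take p).count f = 0 :=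
        List.count_eq_zero_of_not_mem fun h => hi (List.mem_of_mem_take h)
      rw [this]; simp only [Nat.cast_zero, mul_zero]; omega

/-! ### special regions -/

def wS (b : ℕ) {m : ℕ} (k y0 y1 o0 o1 : ℤ) : PPTEv m → ℤ
  | .k => k
  | .y0 => y0
  | .y1 => y1
  | .o0 => o0
  | .o1 => o1
  | _ => 0

theorem psum_H (b : ℕ) {m : ℕ} (φ : CMSat m) (w : PPTEv m → ℤ) (p : ℕ) :
    psum w (gadPPT b φ .H) p =
      (min p b : ℕ) * w .k + (if p ≤ b then 0 else w .y0) + (if p ≤ b + 1 then 0 else w .o0)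
      + (min (p - (b + 2)) b : ℕ) * w .k
      + (if p ≤ 2 * b + 2 then 0 else w .y1) + (if p ≤ 2 * b + 3 then 0 else w .y0)
      + (if p ≤ 2 * b + 4 then 0 else w .o1) + (min (p - (2 * b + 5)) b : ℕ) * w .k := by
  simp only [gadPPT, psum_append, psum_cons, psum_nil, psum_replicate, List.length_append,
    List.length_replicate, List.length_cons, List.length_nil]
  have e1 : p - (b + (0 + 1 + 1) + b + (0 + 1 + 1 + 1)) = p - (2 * b + 5) := by omega
  have e2 : p - (b + (0 + 1 + 1)) = p - (b + 2) := by omega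
  rw [e1, e2]
  split_ifs <;> first | omega | ring1

theorem H_len (b : ℕ) {m : ℕ} (φ : CMSat m) : (gadPPT b φ .H).length = 3 * b + 5 := by
  simp [gadPPT]; omega

theorem H_lab (b : ℕ) {m : ℕ} (φ : CMSat m) (p : ℕ) (hp : p < 3 * b + 5) :
    (gadPPT b φ .H).getD p .k =
      if p = b ∨ p = 2 * b + 3 then .y0 else if p = b + 1 then .o0 else
      if p = 2 * b + 2 then .y1 else if p = 2 * b + 4 then .o1 else .k := by
  simp only [gadPPT, List.getD_eq_getElem?_getD, List.getElem?_append, List.getElem?_replicate,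
    List.getElem?_cons, List.length_append,
    List.length_replicate, List.length_cons, List.length_nil]
  grind

/-- the region of the model -/
noncomputable def wM (b : ℕ) {m : ℕ} (M : Set (Fin m)) : PPTEv m → ℤ := by
  classical
  exact fun
  | .k => 1
  | .y0 => 0
  | .y1 => 0
  | .o0 => -b
  | .o1 => -b
  | .kk _ => b
  | .z _ => 0
  | .X v => if v ∈ M then -1 else 0

theorem wM_H {b m : ℕ} (φ : CMSat m) (M : Set (Fin m)) : Fits b (wM b M) (gadPPT b φ .H) b := by
  intro p
  rw [psum_H]
  simp only [wM]
  split_ifs <;> omega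

theorem feas_wM {b m : ℕ} (φ : CMSat m) (hb : 1 ≤ b) (M : Set (Fin m)) (hM : OneInThreeModel φ M) :
    Feas b φ (wM b M) := by
  classical
  constructor
  · intro e
    cases e <;> simp only [wM] <;> (try split_ifs) <;> omega
  · intro i
    cases i with
    | H => exact ⟨b, wM_H φ M⟩
    | D j =>
      refine ⟨0, fun p => ?_⟩
      simp only [gadPPT, psum_cons, psum_nil, wM]
      split_ifs <;> omega
    | F j =>
      refine ⟨b, fun p => ?_⟩
      simp only [gadPPT, psum_cons, psum_nil, wM]
      split_ifs <;> omega
    | G j =>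
      refine ⟨0, fun p => ?_⟩
      simp only [gadPPT, psum_cons, psum_nil, wM]
      split_ifs <;> omega
    | M j =>
      refine ⟨b, fun p => ?_⟩
      simp only [gadPPT, psum_cons, psum_nil, psum_replicate, wM]
      split_ifs <;> omega
    | T j =>
      refine ⟨b, fun p => ?_⟩
      have h : (φ.cl j 0 ∈ M ∧ φ.cl j 1 ∉ M ∧ φ.cl j 2 ∉ M) ∨
          (φ.cl j 0 ∉ M ∧ φ.cl j 1 ∈ M ∧ φ.cl j 2 ∉ M) ∨
          (φ.cl j 0 ∉ M ∧ φ.cl j 1 ∉ M ∧ φ.cl j 2 ∈ M) := by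
        obtain ⟨x, hx, hu⟩ := hM j
        have h0 := hu 0
        have h1 := hu 1
        have h2 := hu 2
        simp only at hx h0 h1 h2
        fin_cases x
        · left; refine ⟨hx, fun h => ?_, fun h => ?_⟩
          · exact absurd (h1 h) (by decide)
          · exact absurd (h2 h) (by decide)
        · right; left; refine ⟨fun h => ?_, hx, fun h => ?_⟩
          · exact absurd (h0 h) (by decide)
          · exact absurd (h2 h) (by decide)
        · right; right; refine ⟨fun h => ?_, fun h => ?_, hx⟩
          · exact absurd (h0 h) (by decide)
          · exact absurd (h1 h) (by decide)
      simp only [gadPPT, psum_cons, psum_append, psum_nil, psum_replicate, wM,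
        List.length_replicate]
      rcases h with ⟨h0, h1, h2⟩ | ⟨h0, h1, h2⟩ | ⟨h0, h1, h2⟩ <;>
        simp only [h0, h1, h2, if_true, if_false, mul_zero, zero_add, add_zero] <;>
        split_ifs <;> omega

/-- feasibility of a region on `k, y0, y1, o0, o1` with `o0`, `o1` of the same sign (not both) -/
theorem feas_wS {b m : ℕ} (φ : CMSat m) (k y0 y1 o0 o1 u : ℤ)
    (hk : -(b : ℤ) ≤ k ∧ k ≤ b) (hy0 : -(b : ℤ) ≤ y0 ∧ y0 ≤ b) (hy1 : -(b : ℤ) ≤ y1 ∧ y1 ≤ b)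
    (ho0 : 0 ≤ o0) (ho1 : 0 ≤ o1) (ho : o0 + o1 ≤ b)
    (h : Fits b (wS b k y0 y1 o0 o1) (gadPPT b φ .H) u) : Feas b φ (wS b k y0 y1 o0 o1) := by
  constructor
  · intro e
    cases e <;> simp only [wS] <;> omega
  · intro i
    by_cases hi : i = .H
    · subst hi; exact ⟨u, h⟩
    refine ⟨b, fun p => ?_⟩
    cases i <;> simp only [gadPPT, psum_cons, psum_append, psum_nil, psum_replicate, wS,
        List.length_replicate, mul_zero, zero_add, add_zero] <;> (try split_ifs) <;>
        first | omega | (exact absurd rfl hi)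

theorem wS_other {b m : ℕ} (φ : CMSat m) (k y0 y1 : ℤ) (i : PPTIdx m) (hi : i ≠ .H) (p : ℕ) :
    psum (wS b k y0 y1 0 0) (gadPPT b φ i) p = 0 := by
    cases i <;> simp only [gadPPT, psum_cons, psum_append, psum_nil, psum_replicate, wS,
        List.length_replicate, mul_zero, zero_add, add_zero] <;> (try split_ifs) <;>
        first | rfl | (exact absurd rfl hi)

/-! ### solving the atoms -/

def Sol (b : ℕ) {m : ℕ} (φ : CMSat m) (e : PPTEv m) (i : PPTIdx m)
    (s : Fin ((gadPPT b φ i).length + 1)) : Prop :=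
  ∃ sup sig, UnionRegion (tauPPT b) (UPPT b φ) sup sig ∧
      (tauPPT b).delta (sup ⟨i, s⟩) (sig e) = none

theorem sol_alone {b : ℕ} (hb : 1 ≤ b) {m : ℕ} (φ : CMSat m) (e : PPTEv m) (he : Simple e)
    (i : PPTIdx m) (s : Fin ((gadPPT b φ i).length + 1)) (h : e ∉ (gadPPT b φ i).drop s) : Sol b φ e i s := by
  obtain ⟨h1, h2⟩ := feas_wA hb φ e he
  have h3 := cw_bd hb e
  have hwe : wA b e e = cw b e := by simp [wA]
  by_cases hi : e ∈ gadPPT b φ i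
  · refine essa h2 i s e b (h1 i) ?_
    have h4 := gad_count φ i e he hi
    rw [← List.take_append_drop s (gadPPT b φ i), List.count_append,
      List.count_eq_zero_of_not_mem h, add_zero] at h4
    rw [psum_wA, h4, hwe]; omega
  · have h0 : ∀ p, psum (wA b e) (gadPPT b φ i) p = 0 := by
      intro p
      rw [psum_wA, List.count_eq_zero_of_not_mem fun h => hi (List.mem_of_mem_take h)]
      simp
    refine essa h2 i s e 0 (fun p => ?_) ?_
    · rw [h0]; omega
    · rw [h0, hwe]; omega

theorem sol_two {b : ℕ} (hb : 1 ≤ b) {m : ℕ} (φ : CMSat m) (e f : PPTEv m) (he : Simple e)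
    (hf : Simple f) (hef : e ≠ f) (hc : cw b e = b ∨ cw b f = b)
    (i : PPTIdx m) (s : Fin ((gadPPT b φ i).length + 1)) (h : f ∈ (gadPPT b φ i).drop s) (hn : NoBefore e f (gadPPT b φ i)) :
    Sol b φ e i s := by
  have hi := List.mem_of_mem_drop h
  refine essa (feas_wB hb φ e f hef he hf) i s e 0 (fits_wB hb φ e f hef he hf i hi hn) ?_
  have h1 := count_bd hb φ i e he s
  have h3 := cw_bd hb e
  have h3' := cw_bd hb f
  have h4 := gad_count φ i f hf hi
  rw [← List.take_append_drop s (gadPPT b φ i), List.count_append] at h4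
  have h5 : 1 ≤ ((gadPPT b φ i).drop s).count f := List.one_le_count_iff.mpr h
  have h6 : cw b f * 1 ≤ cw b f * (((gadPPT b φ i).drop s).count f : ℕ) :=
    mul_le_mul_of_nonneg_left (by exact_mod_cast h5) (by omega)
  rw [psum_wB _ _ _ hef]
  have hwe : wB b e f e = cw b e := by simp [wB]
  rw [hwe]
  push_cast at h4
  rw [mul_add] at h4
  omega

theorem before_of_sublist {b m : ℕ} (φ : CMSat m) (i : PPTIdx m) (e f : PPTEv m) (hef : e ≠ f)
    (he : Simple e) (hf : Simple f) (h : List.Sublist [f, e] (gadPPT b φ i)) :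
    NoBefore e f (gadPPT b φ i) := by
  rcases gad_order (b := b) φ i e f hef he hf with h1 | h1
  · exact h1
  · rw [NoBefore, List.pairwise_iff_forall_sublist] at h1
    exact absurd ⟨rfl, rfl⟩ (h1 h)

theorem pred_aux {E : Type} (d : E) (A C : List E) (z e : E) (n : ℕ) (hn : 1 ≤ n) (hC : e ∉ C)
    (p : ℕ) (l : List E) (hl : l = A ++ z :: (List.replicate n e ++ C)) (hp : e ∈ l.drop p)
    (hlab : l.getD p d ≠ e) : z ∈ l.drop p ∧ List.Sublist [z, e] l := by
  subst hl
  constructor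
  · by_cases h : p ≤ A.length
    · rw [List.drop_append_of_le_length h]; simp
    · exfalso
      obtain ⟨q, rfl⟩ : ∃ q, p = A.length + (q + 1) := ⟨p - A.length - 1, by omega⟩
      rw [List.drop_append, List.drop_eq_nil_of_le (by omega)] at hp
      simp only [Nat.add_sub_cancel_left, List.drop_succ_cons, List.nil_append] at hp
      by_cases hq : q < n
      · apply hlab
        simp only [List.getD_eq_getElem?_getD]
        rw [List.getElem?_append_right (by omega)]
        simp [List.getElem?_append, hq]
      · rw [List.drop_append, List.drop_eq_nil_of_le (by simpa using hq)] at hp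
        exact hC (List.mem_of_mem_drop (by simpa using hp))
  · refine List.Sublist.trans ?_ (List.sublist_append_right _ _)
    refine List.Sublist.cons_cons _ ?_
    rw [List.singleton_sublist]
    simp; left; omega

theorem sol_T {b : ℕ} (hb : 1 ≤ b) {m : ℕ} (φ : CMSat m) (v : Fin m) (j : Fin m)
    (s : Fin ((gadPPT b φ (.T j)).length + 1))
    (hp : PPTEv.X v ∈ (gadPPT b φ (.T j)).drop s)
    (hlab : (gadPPT b φ (.T j)).getD s .k ≠ .X v) : Sol b φ (.X v) (.T j) s := by
  have hin : v = φ.cl j 0 ∨ v = φ.cl j 1 ∨ v = φ.cl j 2 := by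
    have := List.mem_of_mem_drop hp
    simp [gadPPT] at this
    tauto
  have h0 := (φ.mono01 j).ne
  have h1 := (φ.mono12 j).ne
  have h2 := ((φ.mono01 j).trans (φ.mono12 j)).ne
  have key : ∀ (A C : List (PPTEv m)) (z : PPTEv m), PPTEv.X v ∉ C → Simple z → cw b z = b →
      PPTEv.X v ≠ z →
      gadPPT b φ (.T j) = A ++ z :: (List.replicate b (.X v) ++ C) → Sol b φ (.X v) (.T j) s := by
    intro A C z hC hz hcz hne hl
    obtain ⟨h3, h4⟩ := pred_aux .k A C z (.X v) b hb hC s _ hl hp hlab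
    have hX : Simple (PPTEv.X v) := by simp [Simple]
    exact sol_two hb φ _ z hX hz hne (Or.inr hcz) _ s h3
      (before_of_sublist φ _ _ _ hne hX hz h4)
  rcases hin with rfl | rfl | rfl
  · refine key [] _ (.kk 2) ?_ (by simp [Simple]) (by simp [cw]) (by simp) rfl
    simp [h0, h2]
  · refine key (.kk 2 :: List.replicate b (.X (φ.cl j 0))) _
      (.z ⟨2 * (j : ℕ), by have := j.isLt; omega⟩) ?_ (by simp [Simple]) (by simp [cw]) (by simp) rfl
    simp [h1]
  · refine key (.kk 2 :: (List.replicate b (.X (φ.cl j 0)) ++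
      .z ⟨2 * (j : ℕ), by have := j.isLt; omega⟩ :: (List.replicate b (.X (φ.cl j 1))))) _
      (.z ⟨2 * (j : ℕ) + 1, by have := j.isLt; omega⟩) ?_ (by simp [Simple]) (by simp [cw])
      (by simp) (by simp [gadPPT]; rfl)
    simp

theorem getD_simple {b m : ℕ} (φ : CMSat m) (i : PPTIdx m) (hi : i ≠ .H) (p : ℕ)
    (hp : p < (gadPPT b φ i).length) : Simple ((gadPPT b φ i).getD p .k) := by
  apply blocks_simple b φ i
  apply mem_expand
  rw [← blocks_expand b φ i hi, List.getD_eq_getElem _ _ hp]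
  exact List.getElem_mem hp

theorem drop_getD {E : Type} (l : List E) (d : E) (p : ℕ) (hp : p < l.length) :
    l.drop p = l.getD p d :: l.drop (p + 1) := by
  rw [List.getD_eq_getElem _ _ hp, List.drop_eq_getElem_cons hp]

theorem sol_other {b : ℕ} (hb : 1 ≤ b) {m : ℕ} (φ : CMSat m) (e : PPTEv m) (he : Simple e)
    (i : PPTIdx m) (hi : i ≠ .H) (s : Fin ((gadPPT b φ i).length + 1))
    (h : ¬ ((s : ℕ) < (gadPPT b φ i).length ∧ (gadPPT b φ i).getD s .k = e)) : Sol b φ e i s := by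
  by_cases hd : e ∈ (gadPPT b φ i).drop s
  · have hp : (s : ℕ) < (gadPPT b φ i).length := by
      by_contra hc
      rw [List.drop_eq_nil_of_le (by omega)] at hd
      simp at hd
    have hlab : (gadPPT b φ i).getD s .k ≠ e := fun h' => h ⟨hp, h'⟩
    have hf := getD_simple φ i hi s hp
    have hdr := drop_getD (gadPPT b φ i) .k s hp
    generalize hfd : (gadPPT b φ i).getD s .k = f at *
    have hsub : List.Sublist [f, e] (gadPPT b φ i) := by
      refine List.Sublist.trans ?_ (List.drop_sublist s _)
      rw [hdr] at hd ⊢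
      refine List.Sublist.cons_cons _ ?_
      rw [List.singleton_sublist]
      rcases List.mem_cons.mp hd with h1 | h1
      · exact absurd h1.symm hlab
      · exact h1
    by_cases hc : cw b e = b ∨ cw b f = b
    · exact sol_two hb φ e f he hf hlab.symm hc i s (by rw [hdr]; simp)
        (before_of_sublist φ i e f hlab.symm he hf hsub)
    · cases e <;> simp [cw] at hc
      rename_i v
      cases f <;> simp at hc
      rename_i v'
      cases i with
      | T j => exact sol_T hb φ v j s hd (by rw [hfd]; exact hlab)
      | M j =>
        exfalso
        have h1 := hsub.subset (List.mem_cons_self)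
        have h2 := hsub.subset (List.mem_cons_of_mem _ List.mem_cons_self)
        simp [gadPPT] at h1 h2
        exact hlab (by rw [h1.2, h2.2])
      | _ =>
        exfalso
        have h1 := hsub.subset (List.mem_cons_self)
        simp [gadPPT] at h1
  · exact sol_alone hb φ e he i s hd

theorem feas_S {b m : ℕ} (φ : CMSat m) (k y0 y1 o0 o1 u : ℤ)
    (hs : (k = 1 ∧ y0 = -b ∧ y1 = 0 ∧ o0 = 0 ∧ o1 = 0 ∧ u = b) ∨
      (k = 0 ∧ y0 = b ∧ y1 = -b ∧ o0 = 0 ∧ o1 = 0 ∧ u = b) ∨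
      (k = -1 ∧ y0 = b ∧ y1 = 0 ∧ o0 = 0 ∧ o1 = 0 ∧ u = 0) ∨
      (k = -1 ∧ y0 = 0 ∧ y1 = b ∧ o0 = b ∧ o1 = 0 ∧ u = 0) ∨
      (k = 0 ∧ y0 = -b ∧ y1 = 0 ∧ o0 = b ∧ o1 = 0 ∧ u = 0) ∨
      (k = 0 ∧ y0 = -b ∧ y1 = b ∧ o0 = 0 ∧ o1 = b ∧ u = 0)) (hb : 1 ≤ b) :
    Fits b (wS b k y0 y1 o0 o1) (gadPPT b φ .H) u ∧ Feas b φ (wS b k y0 y1 o0 o1) := by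
  have : Fits b (wS b k y0 y1 o0 o1) (gadPPT b φ .H) u := by
    intro p
    rw [psum_H]
    simp only [wS]
    rcases hs with h | h | h | h | h | h <;> obtain ⟨rfl, rfl, rfl, rfl, rfl, rfl⟩ := h <;>
      split_ifs <;> omega
  refine ⟨this, feas_wS φ k y0 y1 o0 o1 u ?_ ?_ ?_ ?_ ?_ ?_ this⟩ <;> omega

theorem essp {b : ℕ} (hb : 1 ≤ b) {m : ℕ} (φ : CMSat m)
    (M : Set (Fin m)) (hM : OneInThreeModel φ M) (e : PPTEv m) (i : PPTIdx m) (s : Fin ((gadPPT b φ i).length + 1))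
    (h : ¬ ((s : ℕ) < (gadPPT b φ i).length ∧ (gadPPT b φ i).getD s .k = e)) : Sol b φ e i s := by
  by_cases hi : i = .H
  · subst hi
    have hs : (s : ℕ) < 3 * b + 6 := by have := s.isLt; have := H_len b φ; omega
    have hl : ¬ ((s : ℕ) < 3 * b + 5 ∧ (if (s : ℕ) = b ∨ (s : ℕ) = 2 * b + 3 then PPTEv.y0
      else if (s : ℕ) = b + 1 then .o0 else
      if (s : ℕ) = 2 * b + 2 then .y1 else if (s : ℕ) = 2 * b + 4 then .o1 else .k) = e) := by
      rintro ⟨h1, h2⟩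
      rw [H_lab b φ _ h1] at h
      exact h ⟨by have := H_len b φ; omega, h2⟩
    have hnotin : e ∉ gadPPT b φ .H → Simple e → Sol b φ e .H s := fun h1 h2 =>
      sol_alone hb φ e h2 _ s fun h3 => h1 (List.mem_of_mem_drop h3)
    have hA : Simple e → b < psum (wA b e) (gadPPT b φ .H) s + wA b e e → Sol b φ e .H s :=
      fun h1 h2 => essa (feas_wA hb φ e h1).2 _ s e b ((feas_wA hb φ e h1).1 _) h2
    cases e with
    | k =>
      refine essa (feas_wM φ hb M hM) _ s _ b (wM_H φ M) ?_
      rw [psum_H]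
      simp only [wM]
      have : (s : ℕ) = b ∨ (s : ℕ) = b + 1 ∨ (s : ℕ) = 2 * b + 2 ∨ (s : ℕ) = 2 * b + 3 ∨
          (s : ℕ) = 2 * b + 4 ∨ (s : ℕ) = 3 * b + 5 := by
        by_contra hc
        refine hl ⟨by omega, ?_⟩
        rw [if_neg (by omega), if_neg (by omega), if_neg (by omega), if_neg (by omega)]
      clear hl hA hnotin h
      split_ifs <;> omega
    | y0 =>
      by_cases hp : (s : ℕ) < b
      · obtain ⟨h1, h2⟩ := feas_S φ (-1) b 0 0 0 0 (by simp) hb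
        refine essa h2 _ s _ _ h1 ?_
        rw [psum_H]
        simp only [wS]
        split_ifs <;> omega
      · obtain ⟨h1, h2⟩ := feas_S φ 0 b (-b) 0 0 b (by simp) hb
        refine essa h2 _ s _ _ h1 ?_
        rw [psum_H]
        simp only [wS]
        have : (s : ℕ) ≠ b := fun h => hl ⟨by omega, by split_ifs <;> first | rfl | omega⟩
        have : (s : ℕ) ≠ 2 * b + 3 := fun h => hl ⟨by omega, by split_ifs <;> first | rfl | omega⟩
        clear hl hA hnotin h
        split_ifs <;> omega
    | y1 =>
      by_cases hp : (s : ℕ) ≤ b + 1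
      · have hne : (PPTEv.y1 : PPTEv m) ≠ .o0 := by simp
        refine essa (feas_wB hb φ .y1 .o0 hne (by simp [Simple]) (by simp [Simple])) _ s _ 0 ?_ ?_
        · intro p
          rw [psum_H]
          simp only [wB, cw, reduceCtorEq, if_true, if_false]
          split_ifs <;> omega
        · rw [psum_H]
          simp only [wB, cw, reduceCtorEq, if_true, if_false]
          split_ifs <;> omega
      by_cases hp2 : (s : ℕ) < 2 * b + 2
      · obtain ⟨h1, h2⟩ := feas_S φ (-1) 0 b b 0 0 (by simp) hb
        refine essa h2 _ s _ _ h1 ?_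
        rw [psum_H]
        simp only [wS]
        split_ifs <;> omega
      · apply hA (by simp [Simple])
        have : (s : ℕ) ≠ 2 * b + 2 := fun h => hl ⟨by omega, by split_ifs <;> first | rfl | omega⟩
        rw [psum_H]
        simp only [wA, cw, reduceCtorEq, if_true, if_false]
        clear hl hA hnotin h
        split_ifs <;> omega
    | o0 =>
      by_cases hp : (s : ℕ) ≤ b
      · obtain ⟨h1, h2⟩ := feas_S φ 0 (-b) 0 b 0 0 (by simp) hb
        refine essa h2 _ s _ _ h1 ?_
        rw [psum_H]
        simp only [wS]
        split_ifs <;> omega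
      · apply hA (by simp [Simple])
        have : (s : ℕ) ≠ b + 1 := fun h => hl ⟨by omega, by split_ifs <;> first | rfl | omega⟩
        rw [psum_H]
        simp only [wA, cw, reduceCtorEq, if_true, if_false]
        clear hl hA hnotin h
        split_ifs <;> omega
    | o1 =>
      by_cases hp : (s : ℕ) ≤ b + 1
      · have hne : (PPTEv.o1 : PPTEv m) ≠ .o0 := by simp
        refine essa (feas_wB hb φ .o1 .o0 hne (by simp [Simple]) (by simp [Simple])) _ s _ 0 ?_ ?_
        · intro p
          rw [psum_H]
          simp only [wB, cw, reduceCtorEq, if_true, if_false]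
          split_ifs <;> omega
        · rw [psum_H]
          simp only [wB, cw, reduceCtorEq, if_true, if_false]
          split_ifs <;> omega
      by_cases hp2 : (s : ℕ) ≤ 2 * b + 2
      · have hne : (PPTEv.o1 : PPTEv m) ≠ .y1 := by simp
        refine essa (feas_wB hb φ .o1 .y1 hne (by simp [Simple]) (by simp [Simple])) _ s _ 0 ?_ ?_
        · intro p
          rw [psum_H]
          simp only [wB, cw, reduceCtorEq, if_true, if_false]
          split_ifs <;> omega
        · rw [psum_H]
          simp only [wB, cw, reduceCtorEq, if_true, if_false]
          split_ifs <;> omega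
      by_cases hp3 : (s : ℕ) = 2 * b + 3
      · obtain ⟨h1, h2⟩ := feas_S φ 0 (-b) b 0 b 0 (by simp) hb
        refine essa h2 _ s _ _ h1 ?_
        rw [psum_H]
        simp only [wS]
        split_ifs <;> omega
      · apply hA (by simp [Simple])
        have : (s : ℕ) ≠ 2 * b + 4 := fun h => hl ⟨by omega, by split_ifs <;> first | rfl | omega⟩
        rw [psum_H]
        simp only [wA, cw, reduceCtorEq, if_true, if_false]
        clear hl hA hnotin h
        split_ifs <;> omega
    | kk j => exact hnotin (by simp [gadPPT]) (by simp [Simple])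
    | z j => exact hnotin (by simp [gadPPT]) (by simp [Simple])
    | X j => exact hnotin (by simp [gadPPT]) (by simp [Simple])
  · by_cases hk : e = .k
    · subst hk
      obtain ⟨h1, h2⟩ := feas_S φ 1 (-b) 0 0 0 b (by simp) hb
      refine essa h2 i s _ 0 (fun p => ?_) ?_
      · rw [wS_other φ _ _ _ i hi]; omega
      · rw [wS_other φ _ _ _ i hi]; simp [wS]
    by_cases hy : e = .y0
    · subst hy
      obtain ⟨h1, h2⟩ := feas_S φ 0 b (-b) 0 0 b (by simp) hb
      refine essa h2 i s _ 0 (fun p => ?_) ?_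
      · rw [wS_other φ _ _ _ i hi]; omega
      · rw [wS_other φ _ _ _ i hi]; simp [wS]; omega
    exact sol_other hb φ e ⟨hk, hy⟩ i hi s h

theorem ssp {b : ℕ} (hb : 1 ≤ b) {m : ℕ} (φ : CMSat m)
    (M : Set (Fin m)) (hM : OneInThreeModel φ M) (i : PPTIdx m)
    (s s' : Fin ((gadPPT b φ i).length + 1)) (hlt : (s : ℕ) < s') :
    ∃ sup sig, UnionRegion (tauPPT b) (UPPT b φ) sup sig ∧ sup ⟨i, s⟩ ≠ sup ⟨i, s'⟩ := by
  have hs' := s'.isLt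
  by_cases hi : i = .H
  · subst hi
    have hHl := H_len b φ
    by_contra hno
    have n1 := fun w hw => mt (ssa (w := w) hw .H s s') hno
    have a1 := n1 _ (feas_wA hb φ .o0 (by simp [Simple])).2
    have a2 := n1 _ (feas_wA hb φ .y1 (by simp [Simple])).2
    have a3 := n1 _ (feas_wA hb φ .o1 (by simp [Simple])).2
    have a4 := n1 _ (feas_wM φ hb M hM)
    have a5 := n1 _ (feas_S φ 0 b (-b) 0 0 b (by simp) hb).2
    simp only [psum_H, wA, cw, reduceCtorEq, if_true, if_false, wM, wS, ne_eq, not_not, mul_zero,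
      ite_self, add_zero, zero_add, mul_one] at a1 a2 a3 a4 a5
    have c1 : (s : ℕ) ≤ b + 1 ↔ (s' : ℕ) ≤ b + 1 := by split_ifs at a1 <;> omega
    have c2 : (s : ℕ) ≤ 2 * b + 2 ↔ (s' : ℕ) ≤ 2 * b + 2 := by split_ifs at a2 <;> omega
    have c3 : (s : ℕ) ≤ 2 * b + 4 ↔ (s' : ℕ) ≤ 2 * b + 4 := by split_ifs at a3 <;> omega
    clear a1 a2 a3 n1
    simp only [c1, c2, c3] at a4 a5
    split_ifs at a4 a5 <;> omega
  · have hp : (s : ℕ) < (gadPPT b φ i).length := by omega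
    have hf := getD_simple φ i hi s hp
    refine ssa (feas_wA hb φ _ hf).2 i s s' ?_
    have h1 := psum_succ (wA b ((gadPPT b φ i).getD s .k)) .k _ _ hp
    have h3 := cw_bd hb ((gadPPT b φ i).getD s .k)
    generalize (gadPPT b φ i).getD s .k = f at *
    have h2 : psum (wA b f) (gadPPT b φ i) (s + 1) ≤ psum (wA b f) (gadPPT b φ i) s' := by
      rw [psum_wA, psum_wA]
      apply mul_le_mul_of_nonneg_left _ (by omega)
      have : List.Sublist ((gadPPT b φ i).take (s + 1)) ((gadPPT b φ i).take s') :=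
        List.take_sublist_take_left (by omega)
      exact_mod_cast this.count_le f
    have h4 : wA b f f = cw b f := by simp [wA]
    rw [h4] at h1
    omega

/-- If the cubic monotone one-in-three 3-SAT instance `φ` has a
one-in-three model, then the union `U_{τ_PPT^b}(φ)` has the `τ_PPT^b`-ESSP and the
`τ_PPT^b`-SSP. -/
theorem stmt7 (b : ℕ) (hb : 1 ≤ b) {m : ℕ} (φ : CMSat m)
    (M : Set (Fin m)) (hM : OneInThreeModel φ M) :
    UnionHasESSP (tauPPT b) (UPPT b φ) ∧ UnionHasSSP (tauPPT b) (UPPT b φ) := by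
  constructor
  · intro e i s h
    exact essp hb φ M hM e i s (UPPT_none h)
  · intro i s s' hne
    rcases lt_or_gt_of_ne (fun h => hne (Fin.ext h) : (s : ℕ) ≠ s') with h | h
    · exact ssp hb φ M hM i s s' h
    · obtain ⟨sup, sig, h1, h2⟩ := ssp hb φ M hM i s' s h
      exact ⟨sup, sig, h1, h2.symm⟩

end PNS
end

section
/- Let b ∈ ℕ⁺ and let φ be an instance of cubic monotone one-in-three 3-SAT. If the union U_{τ_PT^b}(φ) has the τ_PT^b-ESSP, then φ has a one-in-three model. -/
namespace PNS

/-- Index set of the gadgets of the union `U_{τ_PT^b}(φ)`. -/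
inductive PTIdx (m : ℕ) : Type
  | H : PTIdx m
  | C : Fin 4 → PTIdx m
  | F : Fin (2 * m) → PTIdx m
  | G : Fin (2 * m) → PTIdx m
  | M : Fin m → PTIdx m
  | T : Fin m → PTIdx m

/-- Events of the union `U_{τ_PT^b}(φ)`. -/
inductive PTEv (m : ℕ) : Type
  | k : PTEv m
  | zz : PTEv m
  | o0 : PTEv m
  | o1 : PTEv m
  | kk : Fin 4 → PTEv m
  | z : Fin (2 * m) → PTEv m
  | X : Fin m → PTEv m
  deriving DecidableEq

/-- The label sequences of the linear gadgets of `U_{τ_PT^b}(φ)`. -/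
def gadPT (b : ℕ) {m : ℕ} (φ : CMSat m) : PTIdx m → List (PTEv m)
  | .H => List.replicate b .k ++ List.replicate b .zz ++ [.o0] ++ List.replicate b .k ++
      List.replicate b .zz ++ List.replicate b .o1 ++ List.replicate b .k
  | .C j => .o0 :: .kk j :: List.replicate b .o1
  | .F j => [.kk 0, .z j]
  | .G j => [.z j, .o0]
  | .M i => .kk 1 :: List.replicate b (.X i)
  | .T i => .kk 2 :: (List.replicate b (.X (φ.cl i 0)) ++
      .z ⟨2 * (i : ℕ), by have := i.isLt; omega⟩ :: (List.replicate b (.X (φ.cl i 1)) ++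
      .z ⟨2 * (i : ℕ) + 1, by have := i.isLt; omega⟩ ::
        (List.replicate b (.X (φ.cl i 2)) ++ [.kk 3])))

/-- The union `U_{τ_PT^b}(φ)` of linear gadget TS. -/
noncomputable def UPT (b : ℕ) {m : ℕ} (φ : CMSat m) :
    ∀ i : PTIdx m, TS (Fin ((gadPT b φ i).length + 1)) (PTEv m) :=
  fun i => linOfList (gadPT b φ i) PTEv.k

/-- Running a word through the integer abstraction of a region. -/
def RunZ {E : Type} (b : ℤ) (pre eff : E → ℤ) : ℤ → List E → ℤ → Prop
  | x, [], y => x = y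
  | x, e :: l, y => pre e ≤ x ∧ 0 ≤ x + eff e ∧ x + eff e ≤ b ∧ RunZ b pre eff (x + eff e) l y

theorem RunZ.app {E : Type} {b : ℤ} {pre eff : E → ℤ} (l₁ l₂ : List E) :
    ∀ {x y : ℤ}, RunZ b pre eff x (l₁ ++ l₂) y →
      ∃ w, RunZ b pre eff x l₁ w ∧ RunZ b pre eff w l₂ y := by
  induction l₁ with
  | nil => intro x y h; exact ⟨x, rfl, h⟩
  | cons e l ih =>
    intro x y h
    obtain ⟨h1, h2, h3, h4⟩ := h
    obtain ⟨w, h5, h6⟩ := ih h4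
    exact ⟨w, ⟨h1, h2, h3, h5⟩, h6⟩

theorem RunZ.rep {E : Type} {b : ℤ} {pre eff : E → ℤ} (e : E) (q : ℕ) :
    ∀ {x y : ℤ}, RunZ b pre eff x (List.replicate q e) y →
      y = x + q * eff e ∧ (1 ≤ q → pre e ≤ x ∧ pre e ≤ y - eff e ∧ 0 ≤ y ∧ y ≤ b) := by
  induction q with
  | zero => intro x y h; simp [RunZ] at h; simp [h]
  | succ q ih =>
    intro x y h
    rw [List.replicate_succ] at h
    obtain ⟨h1, h2, h3, h4⟩ := h
    obtain ⟨h5, h6⟩ := ih h4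
    refine ⟨by push_cast; linarith, fun _ => ⟨h1, ?_⟩⟩
    rcases Nat.eq_zero_or_pos q with rfl | hq
    · simp at h5; subst h5; exact ⟨by linarith, h2, h3⟩
    · exact (h6 hq).2

/-- a full block from a legal state: the effect is -1, 0 or 1 -/
theorem RunZ.full {E : Type} {b : ℕ} (hb : 1 ≤ b) {pre eff : E → ℤ} (e : E)
    {x y : ℤ} (hx : 0 ≤ x) (hx' : x ≤ b) (h : RunZ b pre eff x (List.replicate b e) y) :
    0 ≤ y ∧ y ≤ b ∧ pre e ≤ x ∧ pre e ≤ y - eff e ∧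
      ((eff e = 0 ∧ y = x) ∨ (eff e = 1 ∧ x = 0 ∧ y = b) ∨ (eff e = -1 ∧ x = b ∧ y = 0)) := by
  obtain ⟨h1, h2⟩ := h.rep
  obtain ⟨h3, h4, h5, h6⟩ := h2 hb
  refine ⟨h5, h6, h3, h4, ?_⟩
  have hb' : (1 : ℤ) ≤ b := by exact_mod_cast hb
  have a1 : eff e ≤ 1 := by by_contra hc; nlinarith
  have a2 : -1 ≤ eff e := by by_contra hc; nlinarith
  have : eff e = 0 ∨ eff e = 1 ∨ eff e = -1 := by omega
  rcases this with h | h | h <;> rw [h] at h1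
  · left; exact ⟨h, by linarith⟩
  · right; left; exact ⟨h, by linarith, by linarith⟩
  · right; right; exact ⟨h, by linarith, by linarith⟩

/-- precondition and effect of an event -/
def preZ (e : BEvent) : ℤ := sigMinus e
def effZ (e : BEvent) : ℤ := (sigPlus e : ℤ) - sigMinus e

theorem delta_some_s8 {b x w : ℕ} {e : BEvent} (h : (tauPT b).delta x e = some w) :
    preZ e ≤ x ∧ (w : ℤ) = x + effZ e ∧ w ≤ b := by
  cases e with
  | num z => simp [tauPT, deltaPT] at h
  | pair m n =>
    simp only [tauPT, deltaPT] at h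
    split_ifs at h with hc
    simp at h
    simp only [preZ, effZ, sigMinus, sigPlus]
    omega

theorem delta_none_s8 {b x : ℕ} {e : BEvent} (he : e ∈ (tauPT b).events)
    (h : (tauPT b).delta x e = none) :
    (x : ℤ) < preZ e ∨ (b : ℤ) < x + effZ e := by
  obtain ⟨m, n, rfl, -, -⟩ := he
  simp only [tauPT, deltaPT] at h
  split_ifs at h with hc
  simp only [preZ, effZ, sigMinus, sigPlus]
  omega

theorem run_drop {E : Type} {b : ℕ} (sig : E → BEvent) (d : E) (l : List E)
    (sup : ℕ → ℕ)
    (hE : ∀ n, n < l.length → (tauPT b).delta (sup n) (sig (l.getD n d)) = some (sup (n + 1)))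
    : RunZ b (fun e => preZ (sig e)) (fun e => effZ (sig e)) (sup 0) l (sup l.length) := by
  induction l generalizing sup with
  | nil => simp [RunZ]
  | cons e l ih =>
    have h0 := delta_some_s8 (hE 0 (by simp))
    have := ih (fun n => sup (n + 1)) (fun n hn => by
      have := hE (n + 1) (by simpa using hn)
      simpa using this)
    simp only [List.getD_cons_zero, zero_add] at h0
    obtain ⟨h1, h2, h3⟩ := h0
    refine ⟨h1, by beta_reduce; omega, by beta_reduce; omega, ?_⟩
    simp only [← h2]
    exact this

theorem region_run {b m : ℕ} {φ : CMSat m} {sup : (Σ i, Fin ((gadPT b φ i).length + 1)) → ℕ}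
    {sig : PTEv m → BEvent} (hR : UnionRegion (tauPT b) (UPT b φ) sup sig) (i : PTIdx m)
    (l₁ l₂ : List (PTEv m)) (hl : gadPT b φ i = l₁ ++ l₂)
    (hlt : l₁.length < (gadPT b φ i).length + 1) :
    ∃ x y : ℤ, 0 ≤ x ∧ x ≤ b ∧
    RunZ b (fun e => preZ (sig e)) (fun e => effZ (sig e)) x l₁ (sup ⟨i, ⟨l₁.length, hlt⟩⟩) ∧
    RunZ b (fun e => preZ (sig e)) (fun e => effZ (sig e)) (sup ⟨i, ⟨l₁.length, hlt⟩⟩) l₂ y := by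
  obtain ⟨hs, -, hE⟩ := hR
  let s : ℕ → ℕ := fun n => if h : n < (gadPT b φ i).length + 1 then sup ⟨i, ⟨n, h⟩⟩ else 0
  have hs' : ∀ n, n < (gadPT b φ i).length →
      (tauPT b).delta (s n) (sig ((gadPT b φ i).getD n PTEv.k)) = some (s (n + 1)) := by
    intro n hn
    have h1 : n < (gadPT b φ i).length + 1 := by omega
    have h2 : n + 1 < (gadPT b φ i).length + 1 := by omega
    simp only [s, dif_pos h1, dif_pos h2]
    apply hE
    simp only [UPT, linOfList, linTS]
    simp [hn]
  have e1 : s l₁.length = sup ⟨i, ⟨l₁.length, hlt⟩⟩ := by simp only [s, dif_pos hlt]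
  rw [← e1]
  refine ⟨s 0, s (l₁.length + l₂.length), by positivity, ?_, ?_, ?_⟩
  · have h0 : 0 < (gadPT b φ i).length + 1 := by omega
    simp only [s, dif_pos h0]
    exact_mod_cast hs _
  · apply run_drop sig PTEv.k
    intro n hn
    have := hs' n (by rw [hl]; simp; omega)
    rw [hl, List.getD_append _ _ _ _ hn] at this
    exact this
  · have := run_drop (b := b) sig PTEv.k l₂ (fun n => s (l₁.length + n)) (by
      intro n hn
      have := hs' (l₁.length + n) (by rw [hl]; simp; omega)
      rw [hl, List.getD_append_right _ _ _ _ (by omega), Nat.add_sub_cancel_left] at this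
      exact this)
    exact this

theorem region_run' {b m : ℕ} {φ : CMSat m} {sup : (Σ i, Fin ((gadPT b φ i).length + 1)) → ℕ}
    {sig : PTEv m → BEvent} (hR : UnionRegion (tauPT b) (UPT b φ) sup sig) (i : PTIdx m) :
    ∃ x y : ℤ, 0 ≤ x ∧ x ≤ b ∧
    RunZ b (fun e => preZ (sig e)) (fun e => effZ (sig e)) x (gadPT b φ i) y := by
  obtain ⟨x, y, h1, h2, h3, h4⟩ := region_run hR i [] (gadPT b φ i) rfl (by simp)
  exact ⟨_, y, by positivity, by exact_mod_cast hR.1 _, h4⟩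

/-- the combinatorial core -/
theorem core_s8 {b m : ℕ} (hb : 1 ≤ b) (φ : CMSat m) (pre eff : PTEv m → ℤ) (p : ℤ)
    (hp : p = 0 ∨ p = b)
    (hrun : ∀ i, ∃ x y : ℤ, 0 ≤ x ∧ x ≤ b ∧ RunZ b pre eff x (gadPT b φ i) y)
    (ho0 : eff .o0 = b - 2 * p) (ho1 : b * eff .o1 = b - 2 * p) :
    ∃ M : Set (Fin m), OneInThreeModel φ M := by
  have hb' : (1 : ℤ) ≤ b := by exact_mod_cast hb
  have hk : ∀ j, eff (.kk j) = 2 * p - b := by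
    intro j
    obtain ⟨x, y, hx, hx', h⟩ := hrun (.C j)
    simp only [gadPT] at h
    obtain ⟨h1, h2, h3, h4, h5, h6, h7⟩ := h
    obtain ⟨a1, a2, a3, a4, a5⟩ := h7.full hb _ h5 h6
    rcases a5 with ⟨q, _⟩ | ⟨q, q1, q2⟩ | ⟨q, q1, q2⟩ <;> rw [q] at ho1 <;>
      rcases hp with rfl | rfl <;> omega
  have hz : ∀ j, eff (.z j) = 0 := by
    intro j
    obtain ⟨x, y, hx, hx', h⟩ := hrun (.F j)
    obtain ⟨u, v, hu, hu', h'⟩ := hrun (.G j)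
    simp only [gadPT, RunZ] at h h'
    have := hk 0
    rcases hp with rfl | rfl <;> omega
  have hX : ∀ v, eff (.X v) = 0 ∨ eff (.X v) * b = b - 2 * p := by
    intro v
    obtain ⟨x, y, hx, hx', h⟩ := hrun (.M v)
    simp only [gadPT] at h
    obtain ⟨h1, h2, h3, h4⟩ := h
    obtain ⟨a1, a2, a3, a4, a5⟩ := h4.full hb _ h2 h3
    have := hk 1
    rcases a5 with ⟨q, _⟩ | ⟨q, q1, q2⟩ | ⟨q, q1, q2⟩ <;> rw [q] <;>
      rcases hp with rfl | rfl <;> omega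
  refine ⟨{v | eff (.X v) ≠ 0}, fun i => ?_⟩
  obtain ⟨x, y, hx, hx', h⟩ := hrun (.T i)
  simp only [gadPT] at h
  obtain ⟨h1, h2, h3, h⟩ := h
  obtain ⟨w1, r1, -, -, -, h⟩ := h.app
  obtain ⟨w2, r2, -, -, -, h⟩ := h.app
  obtain ⟨w3, r3, -, h5, h6, -⟩ := h.app
  have r1 := r1.rep.1
  have r2 := r2.rep.1
  have r3b := (r3.rep.2 hb).2.2
  have r3 := r3.rep.1
  rw [hz] at r2 r3
  rw [hk] at r1 h2 h3 h5 h6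
  have x0 := hX (φ.cl i 0)
  have x1 := hX (φ.cl i 1)
  have x2 := hX (φ.cl i 2)
  have key : ((b : ℤ) * eff (.X (φ.cl i 0)) + b * eff (.X (φ.cl i 1)) + b * eff (.X (φ.cl i 2)))
      = b - 2 * p := by obtain ⟨u1, u2⟩ := r3b; rcases hp with rfl | rfl <;> linarith
  have hne : (b : ℤ) - 2 * p ≠ 0 := by rcases hp with rfl | rfl <;> omega
  generalize hc : (b : ℤ) - 2 * p = c at *
  have fin : ∀ a0 a1 a2 : ℤ, (a0 = 0 ∨ a0 * b = c) → (a1 = 0 ∨ a1 * b = c) →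
      (a2 = 0 ∨ a2 * b = c) → b * a0 + b * a1 + b * a2 = c →
      (a0 ≠ 0 ∧ a1 = 0 ∧ a2 = 0) ∨ (a0 = 0 ∧ a1 ≠ 0 ∧ a2 = 0) ∨
      (a0 = 0 ∧ a1 = 0 ∧ a2 ≠ 0) := by
    intro a0 a1 a2 g0 g1 g2 g
    have n : ∀ a : ℤ, a * b = c → a ≠ 0 := by
      rintro a ha rfl; simp at ha; exact hne ha.symm
    rcases g0 with rfl | g0 <;> rcases g1 with rfl | g1 <;> rcases g2 with rfl | g2
    · exfalso; apply hne; linarith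
    · exact Or.inr (Or.inr ⟨rfl, rfl, n _ g2⟩)
    · exact Or.inr (Or.inl ⟨rfl, n _ g1, rfl⟩)
    · exfalso; apply hne; linarith
    · exact Or.inl ⟨n _ g0, rfl, rfl⟩
    all_goals exfalso; apply hne; linarith
  rcases fin _ _ _ x0 x1 x2 key with ⟨f0, f1, f2⟩ | ⟨f0, f1, f2⟩ | ⟨f0, f1, f2⟩
  · refine ⟨0, f0, fun j hj => ?_⟩
    fin_cases j
    · rfl
    · exact absurd f1 hj
    · exact absurd f2 hj
  · refine ⟨1, f1, fun j hj => ?_⟩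
    fin_cases j
    · exact absurd f0 hj
    · rfl
    · exact absurd f2 hj
  · refine ⟨2, f2, fun j hj => ?_⟩
    fin_cases j
    · exact absurd f0 hj
    · exact absurd f1 hj
    · rfl

/-- If the union `U_{τ_PT^b}(φ)` has the `τ_PT^b`-ESSP, then the
cubic monotone one-in-three 3-SAT instance `φ` has a one-in-three model. -/
theorem stmt8 (b : ℕ) (hb : 1 ≤ b) {m : ℕ} (φ : CMSat m)
    (h : UnionHasESSP (tauPT b) (UPT b φ)) :
    ∃ M : Set (Fin m), OneInThreeModel φ M := by
  have hb' : (1 : ℤ) ≤ b := by exact_mod_cast hb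
  let l₁ : List (PTEv m) := List.replicate b .k ++ List.replicate b .zz
  let l₂ : List (PTEv m) := .o0 :: (List.replicate b .k ++
      (List.replicate b .zz ++ (List.replicate b .o1 ++ List.replicate b .k)))
  have hl : gadPT b φ .H = l₁ ++ l₂ := by simp [gadPT, l₁, l₂]
  have hlt : l₁.length < (gadPT b φ .H).length + 1 := by rw [hl]; simp
  obtain ⟨sup, sig, hR, hn⟩ := h .k .H ⟨l₁.length, hlt⟩ (by
    simp only [UPT, linOfList, linTS]
    rw [dif_neg]
    rintro ⟨-, h2⟩
    rw [hl, List.getD_append_right _ _ _ _ le_rfl] at h2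
    simp [l₂] at h2)
  obtain ⟨x, y, hx, hx', r1, r2⟩ := region_run hR .H l₁ l₂ hl hlt
  have hn := delta_none_s8 (hR.2.1 _) hn
  have hs : sup ⟨.H, ⟨l₁.length, hlt⟩⟩ ≤ b := hR.1 _
  generalize sup ⟨.H, ⟨l₁.length, hlt⟩⟩ = s at *
  have hrun := region_run' hR
  obtain ⟨w1, c1, c2⟩ := r1.app
  obtain ⟨-, t1, t2, r2⟩ := r2
  obtain ⟨w2, c3, r2⟩ := r2.app
  obtain ⟨w3, c4, r2⟩ := r2.app
  obtain ⟨w4, c5, c6⟩ := r2.app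
  obtain ⟨a1, a2, a3, a4, a5⟩ := c1.full hb _ hx hx'
  obtain ⟨b1, b2, -, -, b5⟩ := c2.full hb _ a1 a2
  obtain ⟨d1, d2, d3, d4, d5⟩ := c3.full hb _ t1 t2
  obtain ⟨e1, e2, -, -, e5⟩ := c4.full hb _ d1 d2
  have k5 := c5.rep.1
  obtain ⟨f1, f2, -, -, f5⟩ := c5.full hb _ e1 e2
  obtain ⟨g1, g2, g3, g4, g5⟩ := c6.full hb _ f1 f2
  have hpre : (0 : ℤ) ≤ preZ (sig .k) := by simp [preZ]
  have hcase : (s = b ∧ s + effZ (sig .o0) = 0 ∧ w3 = b ∧ w4 = 0) ∨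
      ((s : ℤ) = 0 ∧ s + effZ (sig .o0) = b ∧ w3 = 0 ∧ w4 = b) := by
    beta_reduce at *
    omega
  rcases hcase with ⟨q1, q2, q3, q4⟩ | ⟨q1, q2, q3, q4⟩
  · refine core_s8 hb φ _ _ b (Or.inr rfl) hrun ?_ ?_
    · beta_reduce; omega
    · beta_reduce at *; linarith
  · refine core_s8 hb φ _ _ 0 (Or.inl rfl) hrun ?_ ?_
    · beta_reduce; omega
    · beta_reduce at *; linarith


end PNS
end
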